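/- arXiv:1911.12542 — 3 statements merged into one kernel-verified Lean document; each statement's English description precedes it below -/
import Mathlib

section
/- Let G be a 2-connected simple graph of order n. Then α(G) ≥ α(C_n), where C_n is the cycle on n vertices; i.e., among all 2-connected graphs of order n, the cycle has minimum algebraic connectivity. -/
open Matrix SimpleGraph

/-- The algebraic connectivity of `G`: the infimum of the Rayleigh quotients of the
Laplacian matrix over nonzero vectors orthogonal to the all-ones vector.  For a graph on
at least two vertices this is the second smallest eigenvalue of the Laplacian. -/
noncomputable def algCon {V : Type*} [Fintype V] [DecidableEq V] (G : SimpleGraph V) : ℝ :=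
  letI := Classical.decRel G.Adj
  sInf { r : ℝ | ∃ x : V → ℝ, x ≠ 0 ∧ (∑ v, x v) = 0 ∧
    r = (x ⬝ᵥ (G.lapMatrix ℝ *ᵥ x)) / (∑ v, (x v) ^ 2) }

/-- A graph is 2-connected if it has at least two vertices and every pair of distinct
vertices is joined by (at least) two internally disjoint paths. -/
def TwoConnected {V : Type*} (G : SimpleGraph V) : Prop :=
  (∃ u v : V, u ≠ v) ∧ ∀ u v : V, u ≠ v → ∃ p q : G.Walk u v, p.IsPath ∧ q.IsPath ∧
    ∀ w, w ∈ p.support → w ∈ q.support → w = u ∨ w = v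


lemma tc_cross {V : Type*} (G : SimpleGraph V) (hG : TwoConnected G) (A : Set V) (c u v : V)
    (hu : u ∈ A) (hv : v ∉ A) (huc : u ≠ c) (hvc : v ≠ c) :
    ∃ a b, G.Adj a b ∧ a ∈ A ∧ b ∉ A ∧ a ≠ c ∧ b ≠ c := by
  have huv : u ≠ v := by rintro rfl; exact hv hu
  obtain ⟨p, q, -, -, hd⟩ := hG.2 u v huv
  have key : ∀ r : G.Walk u v, c ∉ r.support →
      ∃ a b, G.Adj a b ∧ a ∈ A ∧ b ∉ A ∧ a ≠ c ∧ b ≠ c := by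
    intro r hr
    obtain ⟨d, hd, h1, h2⟩ := r.exists_boundary_dart A hu hv
    refine ⟨d.fst, d.snd, d.adj, h1, h2, ?_, ?_⟩
    · rintro rfl; exact hr (r.dart_fst_mem_support_of_mem_darts hd)
    · rintro rfl; exact hr (r.dart_snd_mem_support_of_mem_darts hd)
  by_cases hp : c ∈ p.support
  · by_cases hq : c ∈ q.support
    · rcases hd c hp hq with h | h
      · exact absurd h.symm huc
      · exact absurd h.symm hvc
    · exact key q hq
  · exact key p hp

lemma sq_expand (Y : ℕ → ℝ) (m a b : ℕ) (hab : a ≤ b) (hb : b ≤ m) :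
    (Y a - Y b) ^ 2 = ∑ k ∈ Finset.range m, ∑ l ∈ Finset.range m,
      if (a ≤ k ∧ k < b) ∧ (a ≤ l ∧ l < b) then (Y (k+1) - Y k) * (Y (l+1) - Y l) else 0 := by
  have h1 : Y b - Y a = ∑ k ∈ Finset.range m, if (a ≤ k ∧ k < b) then (Y (k+1) - Y k) else 0 := by
    rw [← Finset.sum_filter]
    rw [← Finset.sum_Ico_sub Y hab]
    apply Finset.sum_congr _ (fun _ _ => rfl)
    ext k; simp; omega
  have h2 : (Y a - Y b) ^ 2 = (Y b - Y a) * (Y b - Y a) := by ring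
  rw [h2, h1, Finset.sum_mul_sum]
  refine Finset.sum_congr rfl fun k _ => Finset.sum_congr rfl fun l _ => ?_
  by_cases h : a ≤ k ∧ k < b <;> by_cases h' : a ≤ l ∧ l < b <;> simp [h, h']

lemma family_expand {ι : Type*} (S : Finset ι) (a b : ι → ℕ) (Y : ℕ → ℝ) (m : ℕ)
    (hab : ∀ i ∈ S, a i ≤ b i) (hb : ∀ i ∈ S, b i ≤ m) :
    ∑ i ∈ S, (Y (a i) - Y (b i)) ^ 2 = ∑ k ∈ Finset.range m, ∑ l ∈ Finset.range m,
      ((S.filter fun i => (a i ≤ k ∧ k < b i) ∧ (a i ≤ l ∧ l < b i)).card : ℝ) *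
        ((Y (k+1) - Y k) * (Y (l+1) - Y l)) := by
  rw [Finset.sum_congr rfl fun i hi => sq_expand Y m (a i) (b i) (hab i hi) (hb i hi)]
  rw [Finset.sum_comm]
  refine Finset.sum_congr rfl fun k _ => ?_
  rw [Finset.sum_comm]
  refine Finset.sum_congr rfl fun l _ => ?_
  rw [← Finset.sum_filter, Finset.sum_const, nsmul_eq_mul]

lemma family_le {ι κ : Type*} (S : Finset ι) (a b : ι → ℕ) (T : Finset κ) (c d : κ → ℕ)
    (Y : ℕ → ℝ) (hY : Monotone Y) (m : ℕ)
    (hab : ∀ i ∈ S, a i ≤ b i) (hb : ∀ i ∈ S, b i ≤ m)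
    (hcd : ∀ i ∈ T, c i ≤ d i) (hd : ∀ i ∈ T, d i ≤ m)
    (h : ∀ k l, k ≤ l → l < m →
      (T.filter fun i => (c i ≤ k ∧ k < d i) ∧ (c i ≤ l ∧ l < d i)).card ≤
      (S.filter fun i => (a i ≤ k ∧ k < b i) ∧ (a i ≤ l ∧ l < b i)).card) :
    ∑ i ∈ T, (Y (c i) - Y (d i)) ^ 2 ≤ ∑ i ∈ S, (Y (a i) - Y (b i)) ^ 2 := by
  rw [family_expand S a b Y m hab hb, family_expand T c d Y m hcd hd]
  refine Finset.sum_le_sum fun k hk => Finset.sum_le_sum fun l hl => ?_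
  rw [Finset.mem_range] at hk hl
  apply mul_le_mul_of_nonneg_right
  · norm_cast
    rcases le_total k l with hkl | hkl
    · exact h k l hkl hl
    · have := h l k hkl hk
      simpa only [and_comm] using this
  · exact mul_nonneg (sub_nonneg.2 (hY (Nat.le_succ k))) (sub_nonneg.2 (hY (Nat.le_succ l)))

/-- the zigzag arrangement -/
def zig (n i : ℕ) : ℕ := if 2 * i < n then 2 * i else 2 * (n - 1 - i) + 1

def nxt (n i : ℕ) : ℕ := if i + 1 = n then 0 else i + 1

lemma zig_lt {n i : ℕ} (h : i < n) : zig n i < n := by unfold zig; split_ifs <;> omega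

lemma zig_inj {n i j : ℕ} (h : i < n) (h' : j < n) (e : zig n i = zig n j) : i = j := by
  unfold zig at e; split_ifs at e <;> omega

def cycT (n : ℕ) : Finset ℕ := if n = 2 then {0} else Finset.range n

lemma cyc_far (n k l : ℕ) (h : k + 2 ≤ l) :
    ((cycT n).filter fun i => (min (zig n i) (zig n (nxt n i)) ≤ k ∧ k < max (zig n i) (zig n (nxt n i)))
      ∧ (min (zig n i) (zig n (nxt n i)) ≤ l ∧ l < max (zig n i) (zig n (nxt n i)))).card = 0 := by
  rw [Finset.card_eq_zero, Finset.filter_eq_empty_iff]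
  intro i hi
  have hi' : i < n ∨ n = 2 := by
    unfold cycT at hi; split_ifs at hi with h2
    · exact Or.inr h2
    · left; simpa using hi
  have hi0 : n = 2 → i = 0 := by
    intro h2; simpa [cycT, h2] using hi
  unfold zig nxt
  split_ifs <;> omega

lemma cyc_near (n k : ℕ) :
    ((cycT n).filter fun i => (min (zig n i) (zig n (nxt n i)) ≤ k ∧ k < max (zig n i) (zig n (nxt n i)))
      ∧ (min (zig n i) (zig n (nxt n i)) ≤ k+1 ∧ k+1 < max (zig n i) (zig n (nxt n i)))).card ≤ 1 := by
  rw [Finset.card_le_one]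
  intro i hi j hj
  rw [Finset.mem_filter] at hi hj
  obtain ⟨hi, ei⟩ := hi
  obtain ⟨hj, ej⟩ := hj
  by_cases h2 : n = 2
  · simp [cycT, h2] at hi hj; omega
  simp [cycT, h2] at hi hj
  unfold zig nxt at ei ej
  split_ifs at ei ej <;> omega

lemma cyc_same (n k : ℕ) (h2 : n ≠ 2) (hk : k + 1 < n) :
    ((cycT n).filter fun i => (min (zig n i) (zig n (nxt n i)) ≤ k ∧ k < max (zig n i) (zig n (nxt n i)))
      ∧ (min (zig n i) (zig n (nxt n i)) ≤ k ∧ k < max (zig n i) (zig n (nxt n i)))).card ≤ 2 := by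
  refine (Finset.card_le_card (t := {k/2, n - 1 - (k+1)/2}) ?_).trans Finset.card_le_two
  intro i hi
  rw [Finset.mem_filter] at hi
  obtain ⟨hi, ei⟩ := hi
  simp [cycT, h2] at hi
  simp only [Finset.mem_insert, Finset.mem_singleton]
  unfold zig nxt at ei
  split_ifs at ei <;> omega

lemma tc_count {V : Type*} [Fintype V] [DecidableEq V] {n : ℕ} (G : SimpleGraph V)
    [DecidableRel G.Adj] (hG : TwoConnected G) (e : V ≃ Fin n) (k l : ℕ) (hkl : k ≤ l)
    (hl : l < n - 1) :
    ((cycT n).filter fun i => (min (zig n i) (zig n (nxt n i)) ≤ k ∧ k < max (zig n i) (zig n (nxt n i)))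
      ∧ (min (zig n i) (zig n (nxt n i)) ≤ l ∧ l < max (zig n i) (zig n (nxt n i)))).card ≤
    ((Finset.univ.filter fun p : V × V => G.Adj p.1 p.2 ∧ e p.1 < e p.2).filter fun p =>
      ((e p.1 : ℕ) ≤ k ∧ k < (e p.2 : ℕ)) ∧ ((e p.1 : ℕ) ≤ l ∧ l < (e p.2 : ℕ))).card := by
  have vtx : ∀ i, i < n → ∃ v, (e v : ℕ) = i := fun i hi => ⟨e.symm ⟨i, hi⟩, by simp⟩
  have einj : ∀ u v, (e u : ℕ) = e v → u = v := fun u v h => e.injective (Fin.ext h)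
  rcases Nat.lt_or_ge (k+1) l with h | h
  · rw [cyc_far n k l (by omega)]; exact Nat.zero_le _
  obtain ⟨v0, hv0⟩ := vtx k (by omega)
  obtain ⟨v1, hv1⟩ := vtx (k+1) (by omega)
  rcases Nat.eq_or_lt_of_le hkl with rfl | h'
  · have step : ∀ c u v : V, (e u : ℕ) ≤ k → k < (e v : ℕ) → u ≠ c → v ≠ c →
        ∃ a b, G.Adj a b ∧ (e a : ℕ) ≤ k ∧ k < (e b : ℕ) ∧ a ≠ c ∧ b ≠ c := by
      intro c u v hu hv huc hvc
      obtain ⟨a, b, h1, h2, h3, h4, h5⟩ := tc_cross G hG {w | (e w : ℕ) ≤ k} c u v hu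
        (by simpa using hv) huc hvc
      exact ⟨a, b, h1, h2, by simpa using h3, h4, h5⟩
    by_cases h2 : n = 2
    · have c1 : (cycT n).card = 1 := by simp [cycT, h2]
      refine (Finset.card_filter_le _ _).trans ?_
      rw [c1, Nat.one_le_iff_ne_zero, Finset.card_ne_zero]
      obtain ⟨p, q, -⟩ := hG.2 v0 v1 (by rintro rfl; omega)
      obtain ⟨d, -, h1, h3⟩ := p.exists_boundary_dart {w | (e w : ℕ) ≤ k} (by simp [hv0])
        (by simp [hv1])
      simp only [Set.mem_ofPred_eq, not_le] at h1 h3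
      exact ⟨(d.fst, d.snd), by simp [d.adj, ← Fin.val_fin_lt, -Fin.val_fin_lt]; omega⟩
    · refine (cyc_same n k h2 (by omega)).trans ?_
      have two : ∃ a b c d, G.Adj a b ∧ (e a : ℕ) ≤ k ∧ k < (e b : ℕ) ∧
          G.Adj c d ∧ (e c : ℕ) ≤ k ∧ k < (e d : ℕ) ∧ (a, b) ≠ (c, d) := by
        rcases Nat.eq_zero_or_pos k with hk0 | hk0
        · obtain ⟨v2, hv2⟩ := vtx 2 (by omega)
          obtain ⟨a, b, hab, ha, hb, -, -⟩ := step v2 v0 v1 (by omega) (by omega)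
            (by rintro rfl; omega) (by rintro rfl; omega)
          have : ∃ v, k < (e v : ℕ) ∧ v ≠ b := by
            by_cases hb1 : v1 = b
            · exact ⟨v2, by omega, by rintro rfl; rw [← hb1] at hv2; omega⟩
            · exact ⟨v1, by omega, hb1⟩
          obtain ⟨v, hv, hvb⟩ := this
          obtain ⟨c, d, hcd, hc, hd, -, hdb⟩ := step b v0 v (by omega) hv
            (by rintro rfl; omega) hvb
          exact ⟨a, b, c, d, hab, ha, hb, hcd, hc, hd, fun h => hdb (Prod.ext_iff.1 h).2.symm⟩
        · obtain ⟨v2, hv2⟩ := vtx 0 (by omega)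
          obtain ⟨a, b, hab, ha, hb, -, -⟩ := step v2 v0 v1 (by omega) (by omega)
            (by rintro rfl; omega) (by rintro rfl; omega)
          have : ∃ v, (e v : ℕ) ≤ k ∧ v ≠ a := by
            by_cases hb1 : v0 = a
            · exact ⟨v2, by omega, by rintro rfl; rw [← hb1] at hv2; omega⟩
            · exact ⟨v0, by omega, hb1⟩
          obtain ⟨v, hv, hvb⟩ := this
          obtain ⟨c, d, hcd, hc, hd, hca, -⟩ := step a v v1 hv (by omega)
            hvb (by rintro rfl; omega)
          exact ⟨a, b, c, d, hab, ha, hb, hcd, hc, hd, fun h => hca (Prod.ext_iff.1 h).1.symm⟩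
      obtain ⟨a, b, c, d, hab, ha, hb, hcd, hc, hd, hne⟩ := two
      rw [← Finset.card_pair hne]
      apply Finset.card_le_card
      intro p hp
      simp only [Finset.mem_insert, Finset.mem_singleton] at hp
      rcases hp with rfl | rfl
      · simp [hab, ← Fin.val_fin_lt, -Fin.val_fin_lt]; omega
      · simp [hcd, ← Fin.val_fin_lt, -Fin.val_fin_lt]; omega
  · obtain rfl : l = k + 1 := by omega
    refine (cyc_near n k).trans ?_
    obtain ⟨v2, hv2⟩ := vtx (k+2) (by omega)
    obtain ⟨a, b, hab, ha, hb, hac, hbc⟩ := tc_cross G hG {w | (e w : ℕ) ≤ k} v1 v0 v2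
      (by simp [hv0]) (by simp [hv2]) (by rintro rfl; omega) (by rintro rfl; omega)
    simp only [Set.mem_ofPred_eq, not_le] at ha hb
    have : (e b : ℕ) ≠ k + 1 := fun h => hbc (einj _ _ (h.trans hv1.symm))
    rw [Nat.one_le_iff_ne_zero, Finset.card_ne_zero]
    exact ⟨(a, b), by simp [hab, ← Fin.val_fin_lt, -Fin.val_fin_lt]; omega⟩

lemma lap_form {V : Type*} [Fintype V] [DecidableEq V] (G : SimpleGraph V) [DecidableRel G.Adj]
    (x : V → ℝ) : x ⬝ᵥ (G.lapMatrix ℝ *ᵥ x) =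
      (∑ i, ∑ j, if G.Adj i j then (x i - x j) ^ 2 else 0) / 2 := by
  rw [← lapMatrix_toLinearMap₂', Matrix.toLinearMap₂'_apply']

lemma energy_G {V : Type*} [Fintype V] [DecidableEq V] {n : ℕ} (G : SimpleGraph V)
    [DecidableRel G.Adj] (e : V ≃ Fin n) (x : V → ℝ) :
    x ⬝ᵥ (G.lapMatrix ℝ *ᵥ x) =
     ∑ p ∈ Finset.univ.filter fun p : V × V => G.Adj p.1 p.2 ∧ e p.1 < e p.2,
      (x p.1 - x p.2) ^ 2 := by
  rw [lap_form, ← Fintype.sum_prod_type' (f := fun i j => if G.Adj i j then (x i - x j) ^ 2 else 0)]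
  have h1 : ∀ p : V × V, (if G.Adj p.1 p.2 then (x p.1 - x p.2) ^ 2 else 0) =
      (if G.Adj p.1 p.2 ∧ e p.1 < e p.2 then (x p.1 - x p.2) ^ 2 else 0) +
      (if G.Adj p.2 p.1 ∧ e p.2 < e p.1 then (x p.2 - x p.1) ^ 2 else 0) := by
    rintro ⟨u, v⟩
    by_cases h : G.Adj u v
    · have h' := h.symm
      rcases lt_or_gt_of_ne (fun he => h.ne (e.injective he)) with hlt | hlt
      · simp [h, h', hlt, hlt.not_gt]
      · simp [h, h', hlt, hlt.not_gt]; ring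
    · have h' : ¬ G.Adj v u := fun h' => h h'.symm
      simp [h, h']
  rw [Finset.sum_congr rfl fun p _ => h1 p, Finset.sum_add_distrib,
    Finset.sum_filter]
  have h2 : (∑ p : V × V, if G.Adj p.2 p.1 ∧ e p.2 < e p.1 then (x p.2 - x p.1) ^ 2 else 0) =
      ∑ p : V × V, if G.Adj p.1 p.2 ∧ e p.1 < e p.2 then (x p.1 - x p.2) ^ 2 else 0 :=
    (Equiv.prodComm V V).sum_comp (fun p : V × V =>
      if G.Adj p.1 p.2 ∧ e p.1 < e p.2 then (x p.1 - x p.2) ^ 2 else 0)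
  rw [h2]; ring

lemma energy_C (n : ℕ) (hn : 2 ≤ n) [DecidableRel (cycleGraph n).Adj] (z : ℕ → ℝ) :
    (fun i : Fin n => z i) ⬝ᵥ ((cycleGraph n).lapMatrix ℝ *ᵥ (fun i : Fin n => z i)) ≤
     ∑ i ∈ cycT n, (z i - z (nxt n i)) ^ 2 := by
  rw [lap_form]
  by_cases h2 : n = 2
  · subst h2
    simp only [Fin.sum_univ_two]
    have a01 : (cycleGraph 2).Adj 0 1 := by simp [cycleGraph_adj']
    have a10 := a01.symm
    simp [a01, a10, cycT, nxt]
    linarith [sq_nonneg (z 0 - z 1), (by ring : (z 1 - z 0)^2 = (z 0 - z 1)^2)]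
  have hb : ∀ i j : Fin n, (if (cycleGraph n).Adj i j then (z i - z j) ^ 2 else 0) ≤
      (if (j:ℕ) = nxt n i then (z i - z (nxt n i)) ^ 2 else 0) +
      (if (i:ℕ) = nxt n j then (z j - z (nxt n j)) ^ 2 else 0) := by
    intro i j
    split_ifs with h h3 h4 h4 h5 h6 h6
    all_goals try positivity
    · rw [h3]; nlinarith [sq_nonneg (z j - z (nxt n j))]
    · rw [h3]; linarith
    · rw [h4]; apply le_of_eq; ring
    · exfalso
      rw [cycleGraph_adj'] at h
      unfold nxt at h3 h4
      have := i.2; have := j.2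
      simp only [Fin.sub_def] at h
      rcases lt_or_ge (i : ℕ) j with hij | hij
      · rw [Nat.mod_eq_of_lt (by omega), Nat.mod_eq_sub_mod (by omega),
          Nat.mod_eq_of_lt (by omega)] at h
        split_ifs at h3 h4 <;> omega
      · rcases Nat.eq_or_lt_of_le hij with hij | hij
        · rw [hij, Nat.sub_add_cancel (by omega)] at h
          simp at h
        · rw [Nat.mod_eq_sub_mod (by omega), Nat.mod_eq_of_lt (by omega),
            Nat.mod_eq_of_lt (by omega)] at h
          split_ifs at h3 h4 <;> omega
  have hnxt : ∀ i, i < n → nxt n i < n := by intro i hi; unfold nxt; split_ifs <;> omega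
  have hs : ∀ i : Fin n, ∑ j : Fin n, (if (j:ℕ) = nxt n i then (z i - z (nxt n i)) ^ 2 else 0)
      = (z i - z (nxt n i)) ^ 2 := by
    intro i
    rw [Finset.sum_eq_single ⟨nxt n i, hnxt i i.2⟩]
    · simp
    · intro b _ hb; rw [if_neg]; intro h; exact hb (Fin.ext h)
    · simp
  have htot : ∑ i ∈ cycT n, (z i - z (nxt n i)) ^ 2 = ∑ i : Fin n, (z i - z (nxt n i)) ^ 2 := by
    rw [Fin.sum_univ_eq_sum_range (fun i => (z i - z (nxt n i)) ^ 2)]; simp [cycT, h2]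
  have := Finset.sum_le_sum fun i (_ : i ∈ Finset.univ) =>
    Finset.sum_le_sum fun j (_ : j ∈ Finset.univ) => hb i j
  simp only [Finset.sum_add_distrib, hs] at this
  rw [Finset.sum_comm (f := fun i j : Fin n => if (i:ℕ) = nxt n j then (z j - z (nxt n j)) ^ 2 else 0)] at this
  simp only [hs] at this
  rw [htot]
  linarith

lemma main_le {V : Type*} [Fintype V] [DecidableEq V] {n : ℕ}
    (G : SimpleGraph V) [DecidableRel G.Adj] [DecidableRel (cycleGraph n).Adj]
    (hcard : Fintype.card V = n) (hn : 2 ≤ n) (hG : TwoConnected G) (x : V → ℝ) :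
    ∃ e : Fin n ≃ V, (x ∘ e) ⬝ᵥ ((cycleGraph n).lapMatrix ℝ *ᵥ (x ∘ e)) ≤
      x ⬝ᵥ (G.lapMatrix ℝ *ᵥ x) := by
  let e0 : Fin n ≃ V := (Fintype.equivFinOfCardEq hcard).symm
  let f : Fin n ≃ V := (Tuple.sort (x ∘ e0)).trans e0
  have hf : Monotone (x ∘ f) := Tuple.monotone_sort (x ∘ e0)
  let Y : ℕ → ℝ := fun k => x (f ⟨min k (n - 1), by omega⟩)
  have hY : Monotone Y := by
    intro a b hab
    apply hf
    rw [Fin.le_def]; simp only; omega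
  have hYe : ∀ u, Y (f.symm u) = x u := by
    intro u
    simp only [Y]
    congr 1
    rw [← Equiv.eq_symm_apply]
    apply Fin.ext
    have := (f.symm u).2
    simp only; omega
  let s : Fin n → Fin n := fun i => ⟨zig n i, zig_lt i.2⟩
  have hs : Function.Injective s := by
    intro i j h
    exact Fin.ext (zig_inj i.2 j.2 (Fin.ext_iff.1 h))
  let σ : Fin n ≃ Fin n := Equiv.ofBijective s (Finite.injective_iff_bijective.1 hs)
  refine ⟨σ.trans f, ?_⟩
  have hz : x ∘ (σ.trans f) = fun i : Fin n => (fun k => Y (zig n k)) i := by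
    funext i
    have := hYe (f (σ i))
    rw [Equiv.symm_apply_apply] at this
    exact this.symm
  rw [hz, energy_G G f.symm x]
  refine (energy_C n hn (fun k => Y (zig n k))).trans ?_
  have hT : ∀ i ∈ cycT n, i < n := by
    intro i hi; unfold cycT at hi; split_ifs at hi <;> simp at hi <;> omega
  have hnxt : ∀ i, i < n → nxt n i < n := by intro i hi; unfold nxt; split_ifs <;> omega
  have := family_le (Finset.univ.filter fun p : V × V => G.Adj p.1 p.2 ∧ f.symm p.1 < f.symm p.2)
    (fun p => (f.symm p.1 : ℕ)) (fun p => (f.symm p.2 : ℕ)) (cycT n)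
    (fun i => min (zig n i) (zig n (nxt n i))) (fun i => max (zig n i) (zig n (nxt n i)))
    Y hY (n - 1)
    (by intro p hp; simp only [Finset.mem_filter] at hp; exact hp.2.2.le)
    (by intro p hp; have := (f.symm p.2).2; omega)
    (by intro i hi; exact min_le_max)
    (by
      intro i hi
      have h1 := zig_lt (hT i hi)
      have h2 := zig_lt (hnxt i (hT i hi))
      omega)
    (fun k l hkl hl => tc_count G hG f.symm k l hkl hl)
  simp only [hYe] at this
  refine le_trans (le_of_eq ?_) this
  refine Finset.sum_congr rfl fun i _ => ?_
  rcases le_total (zig n i) (zig n (nxt n i)) with h | h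
  · rw [min_eq_left h, max_eq_right h]
  · rw [min_eq_right h, max_eq_left h]; ring

theorem algCon_twoConnected_ge_cycle
    {V : Type*} [Fintype V] [DecidableEq V] {n : ℕ}
    (G : SimpleGraph V) (hcard : Fintype.card V = n) (hG : TwoConnected G) :
    algCon G ≥ algCon (SimpleGraph.cycleGraph n) := by
  obtain ⟨u, v, huv⟩ := hG.1
  have hn : 2 ≤ n := by
    have := Fintype.one_lt_card_iff.2 ⟨u, v, huv⟩
    omega
  unfold algCon
  apply le_csInf
  · refine ⟨_, fun w => (if w = u then 1 else 0) - (if w = v then 1 else 0), ?_, ?_, rfl⟩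
    · intro h
      have := congrFun h u
      simp [huv] at this
    · simp
  · rintro r ⟨x, hx, hs, rfl⟩
    letI := Classical.decRel G.Adj
    letI := Classical.decRel (cycleGraph n).Adj
    obtain ⟨e, he⟩ := main_le G hcard hn hG x
    have hsq : ∑ i, ((x ∘ e) i) ^ 2 = ∑ v, (x v) ^ 2 := e.sum_comp (fun v => (x v) ^ 2)
    refine le_trans (csInf_le ?_ ⟨x ∘ e, ?_, ?_, rfl⟩) ?_
    · refine ⟨0, ?_⟩
      rintro r ⟨y, -, -, rfl⟩
      apply div_nonneg
      · rw [lap_form]; positivity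
      · positivity
    · intro h
      apply hx
      funext w
      have := congrFun h (e.symm w)
      simpa using this
    · rw [← hs]; exact e.sum_comp x
    · rw [hsq]
      exact div_le_div_of_nonneg_right he (by positivity)
end

section
/- Let G be a θ-graph of order n ≥ 4, i.e., a 2-connected graph consisting of three pairwise internally disjoint paths with common endpoints. Then α(G) ≥ α(C_n). -/
open Matrix SimpleGraph

/-- `G` is a θ-graph: it consists of three pairwise internally disjoint paths with common
endpoints `a ≠ b`, which together exhaust all vertices and all edges of `G`. -/
def IsThetaGraph {V : Type*} (G : SimpleGraph V) : Prop :=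
  ∃ (a b : V) (p₁ p₂ p₃ : G.Walk a b), a ≠ b ∧ p₁.IsPath ∧ p₂.IsPath ∧ p₃.IsPath ∧
    (∀ w, w ∈ p₁.support → w ∈ p₂.support → w = a ∨ w = b) ∧
    (∀ w, w ∈ p₁.support → w ∈ p₃.support → w = a ∨ w = b) ∧
    (∀ w, w ∈ p₂.support → w ∈ p₃.support → w = a ∨ w = b) ∧
    (∀ w : V, w ∈ p₁.support ∨ w ∈ p₂.support ∨ w ∈ p₃.support) ∧
    (∀ e, e ∈ G.edgeSet ↔ e ∈ p₁.edges ∨ e ∈ p₂.edges ∨ e ∈ p₃.edges)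

/-- The cycle `C_n` on vertices `v₀, …, v_{n-1}` together with the chords
`v_{(f j).1} v_{(f j).2}` for `j = 1, …, k`. -/
def cyclePlusChords (n k : ℕ) (f : Fin k → ℕ × ℕ) : SimpleGraph (Fin n) :=
  SimpleGraph.cycleGraph n ⊔ SimpleGraph.fromEdgeSet
    {e | ∃ (j : Fin k) (a b : Fin n), (a : ℕ) = (f j).1 ∧ (b : ℕ) = (f j).2 ∧ e = s(a, b)}

/-- `H₁(i₁,…,i_k) = C_n + v_{i₁}v_{n−i₁} + ⋯ + v_{i_k}v_{n−i_k}` (`n` odd); this is also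
the graph `H₂(i₁,…,i_k)` when `n` is even. -/
def H12 (n k : ℕ) (i : Fin k → ℕ) : SimpleGraph (Fin n) :=
  cyclePlusChords n k (fun j => (i j, n - i j))

/-- `H₃(i₁,…,i_k) = C_n + v_{i₁}v_{n−i₁−1} + ⋯ + v_{i_k}v_{n−i_k−1}` (`n` even). -/
def H3 (n k : ℕ) (i : Fin k → ℕ) : SimpleGraph (Fin n) :=
  cyclePlusChords n k (fun j => (i j, n - i j - 1))

/-- Energy of the walk `a, M, b`. -/
def pathE {V : Type*} (x : V → ℝ) : V → List V → V → ℝ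
  | a, [], b => (x a - x b) ^ 2
  | a, m :: M, b => (x a - x m) ^ 2 + pathE x m M b

lemma pathE_insert {V : Type*} (x : V → ℝ) (t b : V) (M : List V) : ∀ (a : V),
    (∃ m ∈ M ++ [b], (x t - x a) * (x t - x m) ≤ 0) →
    ∃ M' : List V, M'.Perm (t :: M) ∧ pathE x a M' b ≤ pathE x a M b := by
  induction M with
  | nil =>
    intro a h
    refine ⟨[t], List.Perm.refl _, ?_⟩
    simp only [List.nil_append, List.mem_singleton, exists_eq_left] at h
    simp only [pathE]
    nlinarith
  | cons m M ih =>
    intro a h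
    by_cases hm : (x t - x a) * (x t - x m) ≤ 0
    · refine ⟨t :: m :: M, List.Perm.refl _, ?_⟩
      simp only [pathE]
      nlinarith
    · obtain ⟨m', hm', hle⟩ := h
      have hmem : m' ∈ M ++ [b] := by
        rcases List.mem_cons.1 (by simpa using hm' : m' ∈ m :: (M ++ [b])) with rfl | h
        · exact absurd hle hm
        · exact h
      obtain ⟨M', hp, hE⟩ := ih m ⟨m', hmem, by
        push Not at hm
        rcases pos_and_pos_or_neg_and_neg_of_mul_pos hm with ⟨h1, h2⟩ | ⟨h1, h2⟩
        · have : x t - x m' ≤ 0 := by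
            by_contra hc
            push Not at hc
            nlinarith [mul_pos h1 hc]
          exact mul_nonpos_of_nonneg_of_nonpos h2.le this
        · have : 0 ≤ x t - x m' := by
            by_contra hc
            push Not at hc
            nlinarith [mul_pos_of_neg_of_neg h1 hc]
          exact mul_nonpos_of_nonpos_of_nonneg h2.le this⟩
      refine ⟨m :: M', ?_, ?_⟩
      · exact (hp.cons m).trans (List.Perm.swap _ _ _)
      · simp only [pathE]
        linarith

lemma pathE_extend {V : Type*} [DecidableEq V] (x : V → ℝ) (h u v : V) (M : List V)
    (hnd : (h :: M).Nodup) (hu : u ∈ h :: M) (hv : v ∈ h :: M)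
    (hmax : ∀ w, x w ≤ x u) (hmin : ∀ w, x v ≤ x w) (S : List V) :
    ∃ M' : List V, (h :: M').Nodup ∧ M ⊆ M' ∧ S ⊆ h :: M' ∧ pathE x h M' h ≤ pathE x h M h := by
  induction S with
  | nil => exact ⟨M, hnd, List.Subset.refl _, by simp, le_rfl⟩
  | cons s S ih =>
    obtain ⟨M', h1, h2, h3, h4⟩ := ih
    by_cases hs : s ∈ h :: M'
    · exact ⟨M', h1, h2, by simp only [List.cons_subset]; exact ⟨hs, h3⟩, h4⟩
    · have key : ∃ m ∈ M' ++ [h], (x s - x h) * (x s - x m) ≤ 0 := by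
        rcases le_total (x s) (x h) with hle | hle
        · refine ⟨v, by have := @h2 v; simp at hv ⊢; tauto, ?_⟩
          exact mul_nonpos_of_nonpos_of_nonneg (by linarith) (by linarith [hmin s])
        · refine ⟨u, by have := @h2 u; simp at hu ⊢; tauto, ?_⟩
          exact mul_nonpos_of_nonneg_of_nonpos (by linarith) (by linarith [hmax s])
      obtain ⟨M'', hp, hE⟩ := pathE_insert x s h M' h key
      have hp' : (h :: M'').Perm (s :: h :: M') := (hp.cons h).trans (List.Perm.swap _ _ _)
      refine ⟨M'', ?_, ?_, ?_, hE.trans h4⟩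
      · rw [hp'.nodup_iff]
        exact List.nodup_cons.2 ⟨hs, h1⟩
      · intro w hw
        rw [hp.mem_iff]
        exact List.mem_cons_of_mem _ (h2 hw)
      · intro w hw
        rw [hp'.mem_iff]
        rcases List.mem_cons.1 hw with rfl | hw
        · simp
        · exact List.mem_cons_of_mem _ (h3 hw)

lemma pathE_eq_sum {V : Type*} (x : V → ℝ) (b : V) (M : List V) : ∀ a,
    pathE x a M b = ∑ i : Fin (M.length + 1),
      (x ((a :: M)[(i : ℕ)]) - x ((M ++ [b])[(i : ℕ)]'(by have := i.2; simp; omega))) ^ 2 := by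
  induction M with
  | nil => intro a; simp [pathE]
  | cons m M ih =>
    intro a
    rw [pathE, ih m]
    simp only [List.length_cons]
    rw [Fin.sum_univ_succ (n := M.length + 1)]
    simp

lemma two_sum_le {V : Type*} [Fintype V] [DecidableEq V] (G : SimpleGraph V)
    [DecidableRel G.Adj] (x : V → ℝ) (L : List (V × V))
    (hnd : (L.map (fun e => s(e.1, e.2))).Nodup) (hadj : ∀ e ∈ L, G.Adj e.1 e.2) :
    2 * (L.map (fun e => (x e.1 - x e.2) ^ 2)).sum ≤
      ∑ i : V, ∑ j : V, if G.Adj i j then (x i - x j) ^ 2 else 0 := by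
  have hL : L.Nodup := List.Nodup.of_map _ hnd
  have hinj := List.inj_on_of_nodup_map hnd
  have hT : (L ++ L.map Prod.swap).Nodup := by
    rw [List.nodup_append']
    refine ⟨hL, hL.map Prod.swap_injective, ?_⟩
    intro e he he'
    obtain ⟨d, hd, rfl⟩ := List.mem_map.1 he'
    have := hinj he hd (by simp [Sym2.eq_swap])
    have h1 : d.2 = d.1 := congrArg Prod.fst this
    exact (hadj d hd).ne h1.symm
  have e1 : 2 * (L.map (fun e => (x e.1 - x e.2) ^ 2)).sum =
      ((L ++ L.map Prod.swap).map (fun e => (x e.1 - x e.2) ^ 2)).sum := by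
    rw [List.map_append, List.sum_append, List.map_map, two_mul]
    congr 2
    apply List.map_congr_left
    intro e _
    simp only [Function.comp, Prod.fst_swap, Prod.snd_swap]
    ring
  rw [e1, ← List.sum_toFinset _ hT, ← Fintype.sum_prod_type'
    (f := fun i j => if G.Adj i j then (x i - x j) ^ 2 else 0)]
  calc _ = ∑ e ∈ (L ++ L.map Prod.swap).toFinset,
        (if G.Adj e.1 e.2 then (x e.1 - x e.2) ^ 2 else 0) := by
        apply Finset.sum_congr rfl
        intro e he
        rw [if_pos]
        rw [List.mem_toFinset, List.mem_append] at he
        rcases he with he | he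
        · exact hadj e he
        · obtain ⟨d, hd, rfl⟩ := List.mem_map.1 he
          exact (hadj d hd).symm
    _ ≤ _ := by
        apply Finset.sum_le_sum_of_subset_of_nonneg (Finset.subset_univ _)
        intro e _ _
        split_ifs <;> positivity

lemma walk_pathE {V : Type*} {G : SimpleGraph V} (x : V → ℝ) {u v : V} (p : G.Walk u v)
    (hp : ¬ p.Nil) :
    ∃ M, p.support.tail = M ++ [v] ∧
      pathE x u M v = (p.darts.map (fun d => (x d.fst - x d.snd) ^ 2)).sum := by
  induction p with
  | nil => simp at hp
  | @cons u w v h p ih =>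
    by_cases hn : p.Nil
    · cases p with
      | nil => exact ⟨[], by simp [pathE]⟩
      | cons _ _ => simp at hn
    · obtain ⟨M, h1, h2⟩ := ih hn
      refine ⟨w :: M, ?_, ?_⟩
      · simp only [Walk.support_cons, List.tail_cons, List.cons_append, ← h1]
        simp
      · simp [pathE, h2]

lemma cycle_energy {V : Type*} [Fintype V] [DecidableEq V] (G : SimpleGraph V)
    [DecidableRel G.Adj] (x : V → ℝ) {a : V} (c : G.Walk a a) (hc : c.IsCycle) :
    ∃ M : List V, (a :: M).Nodup ∧ (∀ w ∈ c.support, w ∈ a :: M) ∧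
      2 * pathE x a M a ≤ ∑ i : V, ∑ j : V, if G.Adj i j then (x i - x j) ^ 2 else 0 := by
  obtain ⟨M, h1, h2⟩ := walk_pathE x c hc.not_nil
  have hsup := hc.support_nodup
  rw [h1] at hsup
  refine ⟨M, ?_, ?_, ?_⟩
  · exact (List.perm_append_singleton a M).nodup_iff.1 hsup
  · intro w hw
    rw [← Walk.cons_tail_support, h1] at hw
    simp at hw ⊢
    tauto
  · have := two_sum_le G x (c.darts.map (fun d => (d.fst, d.snd))) (by
      rw [List.map_map]
      exact hc.isCircuit.isTrail.edges_nodup) (by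
      intro e he
      obtain ⟨d, _, rfl⟩ := List.mem_map.1 he
      exact d.adj)
    rw [h2]
    rw [List.map_map] at this
    exact this

lemma exists_cycle {V : Type*} {G : SimpleGraph V} {a b : V} {p q : G.Walk a b}
    (hab : a ≠ b)
    (hp : p.IsPath) (hq : q.IsPath) (h : ∀ w, w ∈ p.support → w ∈ q.support → w = a ∨ w = b)
    (hl : 1 < p.length ∨ 1 < q.length) :
    ∃ c : G.Walk a a, c.IsCycle ∧ ∀ w, w ∈ p.support ∨ w ∈ q.support → w ∈ c.support := by
  refine ⟨p.append q.reverse, ?_, ?_⟩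
  · refine hp.isCycle_append hq.reverse ?_ (by simpa using hl)
    intro w hw hw'
    have n1 : w ≠ a := by
      rintro rfl
      have := hp.support_nodup
      rw [← Walk.cons_tail_support, List.nodup_cons] at this
      exact this.1 hw
    have n2 : w ≠ b := by
      rintro rfl
      have := hq.reverse.support_nodup
      rw [← Walk.cons_tail_support, List.nodup_cons] at this
      exact this.1 hw'
    have m2 : w ∈ q.support := by
      have := List.mem_of_mem_tail hw'
      simpa using this
    rcases h w (List.mem_of_mem_tail hw) m2 with h | h
    · exact n1 h
    · exact n2 h
  · intro w hw
    simpa [Walk.mem_support_append_iff] using hw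

lemma short_support {V : Type*} {G : SimpleGraph V} {a b : V} (p : G.Walk a b)
    (h : p.length ≤ 1) : ∀ w ∈ p.support, w = a ∨ w = b := by
  cases p with
  | nil => simp
  | cons h p => 
    cases p with
    | nil => simp
    | cons _ _ => simp at h

lemma theta_cycle {V : Type*} [Fintype V] {G : SimpleGraph V} (hn : 4 ≤ Fintype.card V)
    (hG : IsThetaGraph G) (u v : V) :
    ∃ (a : V) (c : G.Walk a a), c.IsCycle ∧ u ∈ c.support ∧ v ∈ c.support := by
  classical
  obtain ⟨a, b, p₁, p₂, p₃, hab, h1, h2, h3, h12, h13, h23, hall, -⟩ := hG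
  have hlong : 1 < p₁.length ∨ 1 < p₂.length ∨ 1 < p₃.length := by
    by_contra hc
    push Not at hc
    obtain ⟨c1, c2, c3⟩ := hc
    have : (Finset.univ : Finset V) ⊆ {a, b} := by
      intro w _
      simp only [Finset.mem_insert, Finset.mem_singleton]
      rcases hall w with h | h | h
      · exact short_support _ c1 w h
      · exact short_support _ c2 w h
      · exact short_support _ c3 w h
    have := Finset.card_le_card this
    have h2 := Finset.card_le_two (a := a) (b := b)
    rw [Finset.card_univ] at this
    omega
  have C12 := exists_cycle hab h1 h2 h12
  have C13 := exists_cycle hab h1 h3 h13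
  have C23 := exists_cycle hab h2 h3 h23
  have s1 := short_support p₁
  have s2 := short_support p₂
  have s3 := short_support p₃
  have key : ((1 < p₁.length ∨ 1 < p₂.length) ∧ (u ∈ p₁.support ∨ u ∈ p₂.support) ∧
        (v ∈ p₁.support ∨ v ∈ p₂.support)) ∨
      ((1 < p₁.length ∨ 1 < p₃.length) ∧ (u ∈ p₁.support ∨ u ∈ p₃.support) ∧
        (v ∈ p₁.support ∨ v ∈ p₃.support)) ∨
      ((1 < p₂.length ∨ 1 < p₃.length) ∧ (u ∈ p₂.support ∨ u ∈ p₃.support) ∧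
        (v ∈ p₂.support ∨ v ∈ p₃.support)) := by
    have a1 := p₁.start_mem_support
    have a2 := p₂.start_mem_support
    have a3 := p₃.start_mem_support
    have b1 := p₁.end_mem_support
    have b2 := p₂.end_mem_support
    have b3 := p₃.end_mem_support
    have hu := hall u
    have hv := hall v
    have f1 : ∀ w, w = a ∨ w = b → w ∈ p₁.support ∧ w ∈ p₂.support ∧ w ∈ p₃.support := by
      rintro w (rfl | rfl) <;> simp
    have t1 : ∀ w, w ∈ p₁.support → 1 < p₁.length ∨ (w ∈ p₂.support ∧ w ∈ p₃.support) := by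
      intro w hw
      by_cases h : p₁.length ≤ 1
      · exact Or.inr (f1 w (s1 h w hw)).2
      · exact Or.inl (by omega)
    have t2 : ∀ w, w ∈ p₂.support → 1 < p₂.length ∨ (w ∈ p₁.support ∧ w ∈ p₃.support) := by
      intro w hw
      by_cases h : p₂.length ≤ 1
      · exact Or.inr ⟨(f1 w (s2 h w hw)).1, (f1 w (s2 h w hw)).2.2⟩
      · exact Or.inl (by omega)
    have t3 : ∀ w, w ∈ p₃.support → 1 < p₃.length ∨ (w ∈ p₁.support ∧ w ∈ p₂.support) := by
      intro w hw
      by_cases h : p₃.length ≤ 1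
      · exact Or.inr ⟨(f1 w (s3 h w hw)).1, (f1 w (s3 h w hw)).2.1⟩
      · exact Or.inl (by omega)
    have := t1 u
    have := t2 u
    have := t3 u
    have := t1 v
    have := t2 v
    have := t3 v
    clear t1 t2 t3 f1 a1 a2 a3 b1 b2 b3 C12 C13 C23 s1 s2 s3 h12 h13 h23
    grind only
  rcases key with ⟨hl, hu, hv⟩ | ⟨hl, hu, hv⟩ | ⟨hl, hu, hv⟩
  · obtain ⟨c, hc, hs⟩ := C12 hl
    exact ⟨a, c, hc, hs u hu, hs v hv⟩
  · obtain ⟨c, hc, hs⟩ := C13 hl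
    exact ⟨a, c, hc, hs u hu, hs v hv⟩
  · obtain ⟨c, hc, hs⟩ := C23 hl
    exact ⟨a, c, hc, hs u hu, hs v hv⟩

lemma quad_eq {V : Type*} [Fintype V] [DecidableEq V] (G : SimpleGraph V)
    [DecidableRel G.Adj] (x : V → ℝ) : x ⬝ᵥ (G.lapMatrix ℝ *ᵥ x) =
    (∑ i : V, ∑ j : V, if G.Adj i j then (x i - x j) ^ 2 else 0) / 2 := by
  rw [← lapMatrix_toLinearMap₂', toLinearMap₂'_apply']

lemma cycle_quad {m : ℕ} [DecidableRel (cycleGraph (m + 2)).Adj] (y : Fin (m + 2) → ℝ) :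
    (∑ i, ∑ j, if (cycleGraph (m + 2)).Adj i j then (y i - y j) ^ 2 else 0) ≤
      2 * ∑ i, (y i - y (i + 1)) ^ 2 := by
  have : ∀ i j : Fin (m + 2), (if (cycleGraph (m + 2)).Adj i j then (y i - y j) ^ 2 else 0) ≤
      (if i = j + 1 then (y i - y j) ^ 2 else 0) + (if j = i + 1 then (y i - y j) ^ 2 else 0) := by
    intro i j
    have hiff : (cycleGraph (m + 2)).Adj i j ↔ (i = j + 1 ∨ j = i + 1) := by
      rw [cycleGraph_adj, sub_eq_iff_eq_add', sub_eq_iff_eq_add']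
    have := sq_nonneg (y i - y j)
    split_ifs <;> first | linarith | (exfalso; tauto)
  refine (Finset.sum_le_sum fun i _ => Finset.sum_le_sum fun j _ => this i j).trans ?_
  simp only [Finset.sum_add_distrib]
  rw [Finset.sum_comm]
  simp only [Finset.sum_ite_eq', Finset.mem_univ, if_true]
  rw [two_mul]
  refine le_of_eq ?_
  congr 1
  apply Finset.sum_congr rfl
  intro i _
  ring

lemma final_step {V : Type*} [Fintype V] [DecidableEq V] {m : ℕ} (x : V → ℝ) (a : V)
    (M : List V) (hnd : (a :: M).Nodup) (hall : ∀ w, w ∈ a :: M) (hlen : M.length = m + 1) :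
    ∃ e : Fin (m + 2) ≃ V, ∑ i, (x (e i) - x (e (i + 1))) ^ 2 = pathE x a M a := by
  refine ⟨(finCongr (by simp [hlen])).trans (hnd.getEquivOfForallMemList _ hall), ?_⟩
  rw [pathE_eq_sum]
  rw [← Equiv.sum_comp (finCongr (show m + 2 = M.length + 1 by omega))]
  apply Finset.sum_congr rfl
  intro i _
  congr 2
  simp only [Equiv.trans_apply, List.Nodup.getEquivOfForallMemList_apply, finCongr_apply,
    List.get_eq_getElem, Fin.val_cast]
  congr 1
  induction i using Fin.lastCases with
  | last => simp [← hlen]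
  | cast i =>
    have := i.2
    simp [List.getElem_append, hlen]
    omega

theorem algCon_theta_ge_cycle
    {V : Type*} [Fintype V] [DecidableEq V] {n : ℕ}
    (G : SimpleGraph V) (hcard : Fintype.card V = n) (hn : 4 ≤ n)
    (hG : IsThetaGraph G) :
    algCon G ≥ algCon (SimpleGraph.cycleGraph n) := by
  obtain ⟨m, rfl⟩ : ∃ m, n = m + 2 := ⟨n - 2, by omega⟩
  unfold algCon
  apply le_csInf
  · obtain ⟨u, v, huv⟩ := Fintype.exists_pair_of_one_lt_card (α := V) (by omega)
    refine ⟨_, Pi.single u 1 - Pi.single v 1, ?_, ?_, rfl⟩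
    · intro h
      have := congrFun h u
      simp [huv] at this
    · simp
  · rintro r ⟨x, hx0, hxs, rfl⟩
    letI := Classical.decRel G.Adj
    haveI : Nonempty V := Fintype.card_pos_iff.1 (by omega)
    obtain ⟨u, hu⟩ := Finite.exists_max x
    obtain ⟨v, hv⟩ := Finite.exists_min x
    obtain ⟨a, c, hc, huc, hvc⟩ := theta_cycle (by omega) hG u v
    obtain ⟨M, hM1, hM2, hM3⟩ := cycle_energy G x c hc
    obtain ⟨M', h1, -, h3, h4⟩ := pathE_extend x a u v M hM1 (hM2 u huc) (hM2 v hvc) hu hv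
      Finset.univ.toList
    have hall : ∀ w, w ∈ a :: M' := fun w => h3 (by simp)
    have hlen : M'.length = m + 1 := by
      have e := Fintype.card_congr (h1.getEquivOfForallMemList _ hall)
      simp only [Fintype.card_fin, List.length_cons] at e
      omega
    obtain ⟨e, he⟩ := final_step x a M' h1 hall hlen
    letI := Classical.decRel (cycleGraph (m + 2)).Adj
    have hq := cycle_quad (x ∘ e)
    simp only [Function.comp] at hq
    rw [he] at hq
    have hsq : ∑ i, (x (e i)) ^ 2 = ∑ v, (x v) ^ 2 := Equiv.sum_comp e (fun v => (x v) ^ 2)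
    have hle : ((x ∘ e) ⬝ᵥ ((cycleGraph (m + 2)).lapMatrix ℝ *ᵥ (x ∘ e))) /
        (∑ v, ((x ∘ e) v) ^ 2) ≤ (x ⬝ᵥ (G.lapMatrix ℝ *ᵥ x)) / (∑ v, (x v) ^ 2) := by
      simp only [quad_eq, Function.comp]
      rw [hsq]
      apply div_le_div_of_nonneg_right _ (by positivity)
      linarith
    refine le_trans (csInf_le ?_ ⟨x ∘ e, ?_, ?_, rfl⟩) hle
    · refine ⟨0, ?_⟩
      rintro r ⟨y, -, -, rfl⟩
      rw [quad_eq]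
      positivity
    · intro h
      apply hx0
      funext w
      have := congrFun h (e.symm w)
      simpa using this
    · rw [← hxs]
      exact Equiv.sum_comp e x
end

section
/- Let G be a 2-connected graph of even order n ≥ 4 with α(G) = α(C_n). Then G ≅ C_n, or G ≅ H₂(i₁,…,i_k) = C_n + v_{i₁}v_{n−i₁} + ⋯ + v_{i_k}v_{n−i_k} for some 1 ≤ i₁ ≤ ⋯ ≤ i_k ≤ (n−2)/2, or G ≅ H₃(j₁,…,j_s) = C_n + v_{j₁}v_{n−j₁−1} + ⋯ + v_{j_s}v_{n−j_s−1} for some 1 ≤ j₁ ≤ ⋯ ≤ j_s ≤ (n−4)/2. -/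
open Matrix SimpleGraph

namespace TwoConnEven

open Classical in
/-- The Dirichlet energy. -/
noncomputable def En {V : Type*} [Fintype V] (G : SimpleGraph V) (x : V → ℝ) : ℝ :=
  (∑ i, ∑ j, if G.Adj i j then (x i - x j) ^ 2 else 0) / 2

lemma En_eq {V : Type*} [Fintype V] [DecidableEq V] (G : SimpleGraph V) [DecidableRel G.Adj]
    (x : V → ℝ) : x ⬝ᵥ (G.lapMatrix ℝ *ᵥ x) = En G x := by
  rw [← toLinearMap₂'_apply', lapMatrix_toLinearMap₂', En]
  congr 1
  refine Finset.sum_congr rfl fun i _ => Finset.sum_congr rfl fun j _ => ?_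
  congr

lemma En_nonneg {V : Type*} [Fintype V] (G : SimpleGraph V) (x : V → ℝ) : 0 ≤ En G x := by
  unfold En
  refine div_nonneg (Finset.sum_nonneg fun i _ => Finset.sum_nonneg fun j _ => ?_) (by norm_num)
  split_ifs <;> positivity

lemma En_smul {V : Type*} [Fintype V] (G : SimpleGraph V) (x : V → ℝ) (c : ℝ) :
    En G (c • x) = c ^ 2 * En G x := by
  unfold En
  rw [← mul_div_assoc, Finset.mul_sum]
  congr 1
  refine Finset.sum_congr rfl fun i _ => ?_
  rw [Finset.mul_sum]
  refine Finset.sum_congr rfl fun j _ => ?_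
  simp only [Pi.smul_apply, smul_eq_mul]
  split_ifs <;> ring

lemma En_iso {V W : Type*} [Fintype V] [Fintype W] {G : SimpleGraph V} {H : SimpleGraph W}
    (e : G ≃g H) (x : W → ℝ) : En G (fun v => x (e v)) = En H x := by
  classical
  unfold En
  congr 1
  refine Fintype.sum_equiv e.toEquiv _ _ fun i => ?_
  refine Fintype.sum_equiv e.toEquiv _ _ fun j => ?_
  have : H.Adj (e i) (e j) ↔ G.Adj i j := e.map_adj_iff
  change (if G.Adj i j then _ else _) = (if H.Adj (e i) (e j) then _ else _)
  by_cases h : G.Adj i j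
  · rw [if_pos h, if_pos (this.2 h)]; rfl
  · rw [if_neg h, if_neg (fun h' => h (this.1 h'))]

lemma algCon_eq {V : Type*} [Fintype V] [DecidableEq V] (G : SimpleGraph V) :
    algCon G = sInf { r : ℝ | ∃ x : V → ℝ, x ≠ 0 ∧ (∑ v, x v) = 0 ∧
      r = En G x / (∑ v, (x v) ^ 2) } := by
  unfold algCon
  simp only [En_eq]

lemma sq_pos {V : Type*} [Fintype V] {x : V → ℝ} (hx : x ≠ 0) : 0 < ∑ v, (x v) ^ 2 := by
  obtain ⟨v, hv⟩ := Function.ne_iff.1 hx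
  exact Finset.sum_pos' (fun i _ => sq_nonneg _) ⟨v, Finset.mem_univ _, by
    have : x v ≠ 0 := hv
    positivity⟩

lemma algCon_le {V : Type*} [Fintype V] [DecidableEq V] (G : SimpleGraph V) (x : V → ℝ)
    (hs : ∑ v, x v = 0) : algCon G * ∑ v, (x v) ^ 2 ≤ En G x := by
  by_cases hx : x = 0
  · subst hx
    simpa using En_nonneg G 0
  · rw [← le_div_iff₀ (sq_pos hx), algCon_eq]
    refine csInf_le ⟨0, ?_⟩ ⟨x, hx, hs, rfl⟩
    rintro r ⟨y, hy, -, rfl⟩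
    exact div_nonneg (En_nonneg _ _) (sq_pos hy).le

lemma exists_min {V : Type*} [Fintype V] [DecidableEq V] (G : SimpleGraph V)
    (hV : ∃ u v : V, u ≠ v) :
    ∃ x : V → ℝ, x ≠ 0 ∧ ∑ v, x v = 0 ∧ En G x = algCon G * ∑ v, (x v) ^ 2 := by
  classical
  let K : Set (V → ℝ) := {x | ∑ v, x v = 0 ∧ ∑ v, (x v) ^ 2 = 1}
  have hcont : Continuous (En G) := by
    unfold En
    refine Continuous.div_const (continuous_finsetSum _ fun i _ =>
      continuous_finsetSum _ fun j _ => ?_) _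
    split_ifs <;> fun_prop
  have hK : IsCompact K := by
    refine Metric.isCompact_of_isClosed_isBounded ?_ ?_
    · refine IsClosed.inter (isClosed_eq (by fun_prop) (by fun_prop))
        (isClosed_eq (by fun_prop) (by fun_prop))
    · refine (Metric.isBounded_closedBall (x := (0 : V → ℝ)) (r := 1)).subset ?_
      rintro x ⟨-, hx⟩
      rw [mem_closedBall_zero_iff, pi_norm_le_iff_of_nonneg zero_le_one]
      intro i
      rw [Real.norm_eq_abs, ← sq_le_one_iff_abs_le_one, ← hx]
      exact Finset.single_le_sum (f := fun v => (x v) ^ 2) (fun j _ => sq_nonneg _)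
        (Finset.mem_univ i)
  have norm1 : ∀ x : V → ℝ, x ≠ 0 → ∑ v, x v = 0 →
      (Real.sqrt (∑ v, (x v) ^ 2))⁻¹ • x ∈ K := by
    intro x hx hs
    have hp := sq_pos hx
    refine ⟨?_, ?_⟩
    · simp [← Finset.mul_sum, hs]
    · simp only [Pi.smul_apply, smul_eq_mul, mul_pow, ← Finset.mul_sum, inv_pow]
      rw [Real.sq_sqrt hp.le, inv_mul_cancel₀ hp.ne']
  have hne : K.Nonempty := by
    obtain ⟨u, v, huv⟩ := hV
    refine ⟨_, norm1 (Pi.single u 1 - Pi.single v 1) ?_ ?_⟩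
    · intro h
      have := congrFun h u
      simp [huv] at this
    · simp [Finset.sum_sub_distrib]
  obtain ⟨x, hxK, hmin⟩ := hK.exists_isMinOn hne hcont.continuousOn
  have hx0 : x ≠ 0 := by
    rintro rfl
    have := hxK.2
    simp at this
  refine ⟨x, hx0, hxK.1, ?_⟩
  rw [hxK.2, mul_one]
  refine le_antisymm ?_ (by simpa [hxK.2] using algCon_le G x hxK.1)
  rw [algCon_eq]
  refine le_csInf ⟨_, x, hx0, hxK.1, rfl⟩ ?_
  rintro r ⟨y, hy, hs, rfl⟩
  have := hmin (norm1 y hy hs)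
  simp only [Set.mem_ofPred_eq, En_smul, inv_pow, Real.sq_sqrt (sq_pos hy).le] at this
  rw [div_eq_inv_mul]
  exact this

lemma eig {V : Type*} [Fintype V] [DecidableEq V] (G : SimpleGraph V) [DecidableRel G.Adj]
    (l : ℝ) (hl : ∀ x : V → ℝ, ∑ v, x v = 0 → l * ∑ v, (x v) ^ 2 ≤ En G x)
    (x : V → ℝ) (hs : ∑ v, x v = 0) (hx : En G x = l * ∑ v, (x v) ^ 2) :
    G.lapMatrix ℝ *ᵥ x = l • x := by
  set L := G.lapMatrix ℝ with hL
  have hsym : ∀ a b : V → ℝ, a ⬝ᵥ (L *ᵥ b) = b ⬝ᵥ (L *ᵥ a) := by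
    intro a b
    rw [dotProduct_mulVec, ← mulVec_transpose, (isSymm_lapMatrix ℝ G).eq, dotProduct_comm]
  have hsq : ∀ a : V → ℝ, ∑ v, (a v) ^ 2 = a ⬝ᵥ a := by
    intro a; simp [dotProduct, sq]
  have hsum : ∀ a : V → ℝ, ∑ v, a v = a ⬝ᵥ (fun _ => 1) := by
    intro a; simp [dotProduct]
  set y := L *ᵥ x - l • x with hy
  have hys : ∑ v, y v = 0 := by
    rw [hsum, hy, sub_dotProduct, smul_dotProduct, ← hsum x, hs, dotProduct_comm, hsym,
      lapMatrix_mulVec_const_eq_zero]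
    simp
  have key : ∀ t : ℝ, 0 ≤ (En G y - l * (y ⬝ᵥ y)) * (t * t) + (2 * (y ⬝ᵥ y)) * t + 0 := by
    intro t
    have h1 := hl (x + t • y) (by simp [Finset.sum_add_distrib, ← Finset.mul_sum, hs, hys])
    have h2 : (y ⬝ᵥ y) = y ⬝ᵥ (L *ᵥ x) - l * (y ⬝ᵥ x) := by
      conv_lhs => rw [hy]
      rw [← hy, dotProduct_sub, dotProduct_smul, smul_eq_mul]
    have h3 : x ⬝ᵥ y = y ⬝ᵥ x := dotProduct_comm _ _
    have h4 := hsym x y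
    rw [hsq] at h1 hx
    rw [← En_eq] at h1 hx ⊢
    simp only [mulVec_add, mulVec_smul, add_dotProduct, dotProduct_add, smul_dotProduct,
      dotProduct_smul, smul_eq_mul, ← hL] at h1 hx ⊢
    rw [h4, h3] at h1
    linear_combination h1 + hx - 2 * t * h2
  have h5 := discrim_le_zero key
  have h6 : y ⬝ᵥ y = 0 := by
    unfold discrim at h5
    nlinarith [sq_nonneg (y ⬝ᵥ y)]
  have h7 : y = 0 := dotProduct_self_eq_zero.1 h6
  exact sub_eq_zero.1 h7

open Classical in
/-- Number of edges covering both gaps `i` and `j`. -/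
noncomputable def cov {n : ℕ} (G : SimpleGraph (Fin n)) (i j : ℕ) : ℕ :=
  (Finset.univ.filter fun p : Fin n × Fin n => G.Adj p.1 p.2 ∧
    (p.1 : ℕ) ≤ i ∧ i < (p.2 : ℕ) ∧ (p.1 : ℕ) ≤ j ∧ j < (p.2 : ℕ)).card

lemma tele (n : ℕ) (X : ℕ → ℝ) (a b : ℕ) (hab : a ≤ b) (hb : b < n) :
    X b - X a = ∑ k ∈ Finset.range (n - 1), if a ≤ k ∧ k < b then X (k + 1) - X k else 0 := by
  rw [← Finset.sum_filter, ← Finset.sum_Ico_sub X hab]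
  refine Finset.sum_congr ?_ fun _ _ => rfl
  ext k
  simp only [Finset.mem_Ico, Finset.mem_filter, Finset.mem_range]
  omega

lemma En_half {n : ℕ} (G : SimpleGraph (Fin n)) (x : Fin n → ℝ) :
    En G x = by
      classical exact ∑ p : Fin n × Fin n, if G.Adj p.1 p.2 ∧ p.1 < p.2 then
        (x p.2 - x p.1) ^ 2 else 0 := by
  classical
  unfold En
  have h : ∀ i j, (if G.Adj i j then (x i - x j) ^ 2 else 0) =
      (if G.Adj i j ∧ i < j then (x j - x i) ^ 2 else 0) +
      (if G.Adj j i ∧ j < i then (x i - x j) ^ 2 else 0) := by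
    intro i j
    rcases lt_trichotomy i j with h | h | h
    · simp only [h, and_true, not_lt_of_gt h, and_false, if_false, add_zero]
      split_ifs <;> ring
    · subst h; simp
    · simp only [h, and_true, not_lt_of_gt h, and_false, if_false, zero_add, G.adj_comm j i]
  simp only [h, Finset.sum_add_distrib]
  rw [Finset.sum_comm (f := fun i j => if G.Adj j i ∧ j < i then (x i - x j) ^ 2 else 0),
    Fintype.sum_prod_type]
  ring

lemma En_cov {n : ℕ} (G : SimpleGraph (Fin n)) (X : ℕ → ℝ) :
    En G (fun i => X i) = ∑ i ∈ Finset.range (n - 1), ∑ j ∈ Finset.range (n - 1),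
      (cov G i j : ℝ) * ((X (i + 1) - X i) * (X (j + 1) - X j)) := by
  classical
  rw [En_half]
  have h : ∀ p : Fin n × Fin n, (if G.Adj p.1 p.2 ∧ p.1 < p.2 then
        (X p.2 - X p.1) ^ 2 else 0) = ∑ i ∈ Finset.range (n - 1), ∑ j ∈ Finset.range (n - 1),
      (if G.Adj p.1 p.2 ∧ (p.1 : ℕ) ≤ i ∧ i < (p.2 : ℕ) ∧ (p.1 : ℕ) ≤ j ∧ j < (p.2 : ℕ) then
        (1 : ℝ) else 0) * ((X (i + 1) - X i) * (X (j + 1) - X j)) := by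
    intro p
    split_ifs with hp
    · rw [tele n X p.1 p.2 (by exact_mod_cast hp.2.le) p.2.2, sq, Finset.sum_mul_sum]
      refine Finset.sum_congr rfl fun i _ => Finset.sum_congr rfl fun j _ => ?_
      simp only [hp.1, true_and]
      by_cases h1 : (p.1 : ℕ) ≤ i ∧ i < (p.2 : ℕ)
      · by_cases h2 : (p.1 : ℕ) ≤ j ∧ j < (p.2 : ℕ)
        · simp [h1, h2]
        · have h3 : ¬ ((p.1 : ℕ) ≤ i ∧ i < (p.2 : ℕ) ∧ (p.1 : ℕ) ≤ j ∧ j < (p.2 : ℕ)) :=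
            fun h => h2 h.2.2
          rw [if_neg h2, if_neg h3]; ring
      · have h3 : ¬ ((p.1 : ℕ) ≤ i ∧ i < (p.2 : ℕ) ∧ (p.1 : ℕ) ≤ j ∧ j < (p.2 : ℕ)) :=
          fun h => h1 ⟨h.1, h.2.1⟩
        rw [if_neg h1, if_neg h3]; ring
    · symm
      refine Finset.sum_eq_zero fun i _ => Finset.sum_eq_zero fun j _ => ?_
      rw [if_neg, zero_mul]
      rintro ⟨h1, h2, h3, -, -⟩
      exact hp ⟨h1, by rw [Fin.lt_def]; omega⟩
  rw [Finset.sum_congr rfl fun p _ => h p, Finset.sum_comm]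
  refine Finset.sum_congr rfl fun i _ => ?_
  rw [Finset.sum_comm]
  refine Finset.sum_congr rfl fun j _ => ?_
  rw [← Finset.sum_mul, cov, Finset.sum_boole]

/-- The zigzag cycle. -/
def Zg (n : ℕ) : SimpleGraph (Fin n) where
  Adj a b := (a : ℕ) + 2 = b ∨ (b : ℕ) + 2 = a ∨ ((a : ℕ) = 0 ∧ (b : ℕ) = 1) ∨
    ((a : ℕ) = 1 ∧ (b : ℕ) = 0) ∨ ((a : ℕ) + 1 = b ∧ (b : ℕ) + 1 = n) ∨
    ((b : ℕ) + 1 = a ∧ (a : ℕ) + 1 = n)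
  symm := ⟨fun a b h => by omega⟩
  loopless := ⟨fun a h => by omega⟩

/-- The weights. -/
def wt (i j : ℕ) : ℕ := if i = j then 2 else if i + 1 = j ∨ j + 1 = i then 1 else 0

lemma cov_Zg {n : ℕ} (hn : 3 ≤ n) (i j : ℕ) : cov (Zg n) i j ≤ wt i j := by
  classical
  unfold wt cov
  split_ifs with h1 h2
  · by_contra hc
    push Not at hc
    obtain ⟨⟨a, a'⟩, ha, ⟨b, b'⟩, hb, ⟨c, c'⟩, hcc, hab, hac, hbc⟩ := Finset.two_lt_card.1 hc
    rw [Finset.mem_filter] at ha hb hcc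
    simp only [Finset.mem_univ, true_and, Zg, Prod.mk.injEq, ne_eq,
      Fin.ext_iff] at ha hb hcc hab hac hbc
    have := a'.2
    have := b'.2
    have := c'.2
    subst h1
    omega
  · by_contra hc
    push Not at hc
    obtain ⟨⟨a, a'⟩, ha, ⟨b, b'⟩, hb, hab⟩ := Finset.one_lt_card.1 hc
    rw [Finset.mem_filter] at ha hb
    simp only [Finset.mem_univ, true_and, Zg, Prod.mk.injEq, ne_eq,
      Fin.ext_iff] at ha hb hab
    omega
  · rw [Nat.le_zero, Finset.card_eq_zero, Finset.filter_eq_empty_iff]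
    rintro ⟨a, a'⟩ -
    simp only [Zg]
    omega

/-- No cut vertex. -/
def NC {V : Type*} (G : SimpleGraph V) : Prop :=
  ∀ (v : V) (S : V → Prop) (u w : V), S u → ¬ S w → u ≠ v → w ≠ v →
    ∃ a b, G.Adj a b ∧ S a ∧ ¬ S b ∧ a ≠ v ∧ b ≠ v

lemma NC_of {V : Type*} {G : SimpleGraph V} (hG : TwoConnected G) : NC G := by
  intro v S u w hu hw huv hwv
  have huw : u ≠ w := by rintro rfl; exact hw hu
  obtain ⟨p, q, -, -, hpq⟩ := hG.2 u w huw
  have : ∃ r : G.Walk u w, v ∉ r.support := by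
    by_contra hc
    push Not at hc
    rcases hpq v (hc p) (hc q) with h | h
    · exact huv h.symm
    · exact hwv h.symm
  obtain ⟨r, hr⟩ := this
  obtain ⟨d, hd, h1, h2⟩ := r.exists_boundary_dart {z | S z} hu hw
  refine ⟨d.fst, d.snd, d.adj, h1, h2, ?_, ?_⟩
  · rintro rfl; exact hr (r.dart_fst_mem_support_of_mem_darts hd)
  · rintro rfl; exact hr (r.dart_snd_mem_support_of_mem_darts hd)

lemma NC_iso {V W : Type*} {G : SimpleGraph V} {H : SimpleGraph W} (e : G ≃g H) (h : NC H) :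
    NC G := by
  intro v S u w hu hw huv hwv
  obtain ⟨a, b, hab, ha, hb, hav, hbv⟩ := h (e v) (fun z => S (e.symm z)) (e u) (e w)
    (by simpa using hu) (by simpa using hw) (by simpa using huv) (by simpa using hwv)
  refine ⟨e.symm a, e.symm b, e.symm.map_adj_iff.2 hab, ha, hb, ?_, ?_⟩
  · rintro rfl; simp at hav
  · rintro rfl; simp at hbv

lemma cov_ge {n : ℕ} (hn : 4 ≤ n) (G : SimpleGraph (Fin n)) (hG : NC G) (i j : ℕ)
    (hi : i < n - 1) (hj : j < n - 1) : wt i j ≤ cov G i j := by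
  classical
  have hone : ∀ i, i + 1 < n - 1 → ∃ a b : Fin n, G.Adj a b ∧ (a : ℕ) ≤ i ∧ i + 1 < (b : ℕ) := by
    intro i hi
    obtain ⟨a, b, h1, h2, h3, h4, h5⟩ := hG ⟨i + 1, by omega⟩ (fun z => (z : ℕ) ≤ i)
      ⟨i, by omega⟩ ⟨i + 2, by omega⟩ (by simp) (by simp) (by simp) (by simp)
    simp only [ne_eq, Fin.ext_iff] at h2 h3 h4 h5
    exact ⟨a, b, h1, h2, by omega⟩
  unfold wt cov
  split_ifs with h1 h2
  · subst h1
    have key : ∃ a b a' b' : Fin n, G.Adj a b ∧ G.Adj a' b' ∧ (a : ℕ) ≤ i ∧ i < (b : ℕ) ∧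
        (a' : ℕ) ≤ i ∧ i < (b' : ℕ) ∧ (a ≠ a' ∨ b ≠ b') := by
      by_cases hi0 : i = 0
      · subst hi0
        obtain ⟨a, b, h1, h2, h3, h4, h5⟩ := hG ⟨1, by omega⟩ (fun z => (z : ℕ) ≤ 0)
          ⟨0, by omega⟩ ⟨2, by omega⟩ (by simp) (by simp) (by simp) (by simp)
        simp only [ne_eq, Fin.ext_iff] at h2 h3 h4 h5
        obtain ⟨a', b', h1', h2', h3', h4', h5'⟩ := hG b (fun z => (z : ℕ) ≤ 0)
          ⟨0, by omega⟩ ⟨1, by omega⟩ (by simp) (by simp)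
          (by simp only [ne_eq, Fin.ext_iff]; omega) (by simp only [ne_eq, Fin.ext_iff]; omega)
        exact ⟨a, b, a', b', h1, h1', h2, by omega, h2', by omega, Or.inr h5'.symm⟩
      · obtain ⟨a, b, h1, h2, h3, h4, h5⟩ := hG ⟨0, by omega⟩ (fun z => (z : ℕ) ≤ i)
          ⟨i, by omega⟩ ⟨i + 1, by omega⟩ (by simp) (by simp) (by simpa using hi0) (by simp)
        simp only [ne_eq, Fin.ext_iff] at h2 h3 h4 h5
        obtain ⟨a', b', h1', h2', h3', h4', h5'⟩ := hG a (fun z => (z : ℕ) ≤ i)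
          ⟨0, by omega⟩ ⟨i + 1, by omega⟩ (by simp) (by simp)
          (by simp only [ne_eq, Fin.ext_iff]; omega) (by simp only [ne_eq, Fin.ext_iff]; omega)
        exact ⟨a, b, a', b', h1, h1', h2, by omega, h2', by omega, Or.inl h4'.symm⟩
    obtain ⟨a, b, a', b', h1, h2, h3, h4, h5, h6, h7⟩ := key
    refine Finset.one_lt_card.2 ⟨(a, b), ?_, (a', b'), ?_, ?_⟩
    · simp [h1, h3, h4]
    · simp [h2, h5, h6]
    · simp only [ne_eq, Prod.mk.injEq]; tauto
  · rw [Nat.one_le_iff_ne_zero, ← Nat.pos_iff_ne_zero, Finset.card_pos]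
    rcases h2 with h2 | h2
    · obtain ⟨a, b, h3, h4, h5⟩ := hone i (by omega)
      exact ⟨(a, b), by simp only [Finset.mem_filter, Finset.mem_univ, true_and, h3]; omega⟩
    · obtain ⟨a, b, h3, h4, h5⟩ := hone j (by omega)
      exact ⟨(a, b), by simp only [Finset.mem_filter, Finset.mem_univ, true_and, h3]; omega⟩
  · exact Nat.zero_le _

lemma cyc_adj {n : ℕ} (p q : Fin n) : (cycleGraph n).Adj p q ↔ n ≠ 1 ∧ ((p : ℕ) + 1 = q ∨
    (q : ℕ) + 1 = p ∨ ((p : ℕ) = 0 ∧ (q : ℕ) + 1 = n) ∨ ((q : ℕ) = 0 ∧ (p : ℕ) + 1 = n)) := by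
  rw [cycleGraph_adj']
  have := p.2
  have := q.2
  rcases lt_trichotomy p q with h | h | h
  · rw [Fin.coe_sub_iff_lt.2 h, Fin.coe_sub_iff_le.2 h.le]
    rw [Fin.lt_def] at h
    omega
  · subst h
    rw [Fin.coe_sub_iff_le.2 le_rfl]
    omega
  · rw [Fin.coe_sub_iff_lt.2 h, Fin.coe_sub_iff_le.2 h.le]
    rw [Fin.lt_def] at h
    omega

/-- position to sorted index -/
def pos (n : ℕ) : Fin n ≃ Fin n where
  toFun p := ⟨if 2 * (p : ℕ) < n then 2 * p else 2 * (n - p) - 1, by split_ifs <;> omega⟩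
  invFun s := ⟨if (s : ℕ) % 2 = 0 then s / 2 else n - (s + 1) / 2, by split_ifs <;> omega⟩
  left_inv p := by ext; dsimp only; split_ifs <;> omega
  right_inv p := by ext; dsimp only; split_ifs <;> omega

/-- the zigzag cycle is a cycle -/
def posIso {n : ℕ} (hn : 4 ≤ n) : cycleGraph n ≃g Zg n where
  toEquiv := pos n
  map_rel_iff' := by
    intro p q
    rw [cyc_adj]
    simp only [Zg, pos, Equiv.coe_fn_mk]
    split_ifs <;> omega

lemma real_part {n : ℕ} (hn : 4 ≤ n) (G : SimpleGraph (Fin n)) (hG : NC G)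
    (X : ℕ → ℝ) (l : ℝ) (hmono : ∀ i, i + 1 < n → X i ≤ X (i + 1))
    (hsum : ∑ i : Fin n, X i = 0) (hne : (fun i : Fin n => X i) ≠ 0)
    (hl : ∀ y : Fin n → ℝ, ∑ v, y v = 0 → l * ∑ v, (y v) ^ 2 ≤ En (Zg n) y)
    (hE : En G (fun i => X i) = l * ∑ i : Fin n, (X i) ^ 2) :
    ∃ π, π < 2 ∧ ∀ i j, i < n - 1 → j < n - 1 → i % 2 = π → j % 2 = π → cov G i j = wt i j := by
  classical
  set D : ℕ → ℝ := fun i => X (i + 1) - X i with hD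
  have hD0 : ∀ i, i < n - 1 → 0 ≤ D i := fun i hi => sub_nonneg.2 (hmono i (by omega))
  have hZG := hl (fun i => X i) hsum
  have e1 := En_cov G X
  have e2 := En_cov (Zg n) X
  -- termwise comparison
  have hle : ∀ i ∈ Finset.range (n - 1), ∀ j ∈ Finset.range (n - 1),
      (cov (Zg n) i j : ℝ) * (D i * D j) ≤ (cov G i j : ℝ) * (D i * D j) := by
    intro i hi j hj
    rw [Finset.mem_range] at hi hj
    refine mul_le_mul_of_nonneg_right ?_ (mul_nonneg (hD0 i hi) (hD0 j hj))
    exact_mod_cast (cov_Zg (by omega) i j).trans (cov_ge hn G hG i j hi hj)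
  have hle2 : ∀ i ∈ Finset.range (n - 1), ∑ j ∈ Finset.range (n - 1),
      (cov (Zg n) i j : ℝ) * (D i * D j) ≤ ∑ j ∈ Finset.range (n - 1),
        (cov G i j : ℝ) * (D i * D j) := fun i hi => Finset.sum_le_sum (hle i hi)
  have hEle : En (Zg n) (fun i => X i) ≤ En G (fun i => X i) := by
    rw [e1, e2]; exact Finset.sum_le_sum hle2
  have hEZ : En (Zg n) (fun i => X i) = En G (fun i => X i) :=
    le_antisymm hEle (by rw [hE]; exact hZG)
  have hterm : ∀ i ∈ Finset.range (n - 1), ∀ j ∈ Finset.range (n - 1),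
      (cov (Zg n) i j : ℝ) * (D i * D j) = (cov G i j : ℝ) * (D i * D j) := by
    rw [e1, e2] at hEZ
    have h1 := (Finset.sum_eq_sum_iff_of_le hle2).1 hEZ
    intro i hi
    exact (Finset.sum_eq_sum_iff_of_le (hle i hi)).1 (h1 i hi)
  have hfin : ∀ i j, i < n - 1 → j < n - 1 → 0 < D i → 0 < D j → cov G i j = wt i j := by
    intro i j hi hj h1 h2
    have h3 := hterm i (by simpa using hi) j (by simpa using hj)
    have h4 : (cov (Zg n) i j : ℝ) = (cov G i j : ℝ) :=
      mul_right_cancel₀ (mul_pos h1 h2).ne' h3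
    have h5 : cov (Zg n) i j = cov G i j := by exact_mod_cast h4
    have h6 := cov_Zg (n := n) (by omega) i j
    have h7 := cov_ge hn G hG i j hi hj
    omega
  -- eigenvector equation
  have heig := eig (Zg n) l hl (fun i => X i) hsum (by rw [hEZ, hE])
  have hN : ∀ s a b, s < n → a < n → b < n → a ≠ b →
      (∀ t, t < n → ((s + 2 = t ∨ t + 2 = s ∨ (s = 0 ∧ t = 1) ∨ (s = 1 ∧ t = 0) ∨
        (s + 1 = t ∧ t + 1 = n) ∨ (t + 1 = s ∧ s + 1 = n)) ↔ (t = a ∨ t = b))) →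
      X a + X b = (2 - l) * X s := by
    intro s a b hs ha hb hab h
    have h1 := congrFun heig ⟨s, hs⟩
    have h2 : (Zg n).neighborFinset ⟨s, hs⟩ = {⟨a, ha⟩, ⟨b, hb⟩} := by
      ext t
      rw [mem_neighborFinset]
      have := h t t.2
      simp only [Zg, Finset.mem_insert, Finset.mem_singleton, Fin.ext_iff]
      exact this
    have hab' : (⟨a, ha⟩ : Fin n) ≠ ⟨b, hb⟩ := by simpa using hab
    rw [lapMatrix_mulVec_apply, ← card_neighborFinset_eq_degree, h2, Finset.card_pair hab',
      Finset.sum_pair hab'] at h1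
    simp only [Pi.smul_apply, smul_eq_mul, Nat.cast_ofNat] at h1
    linarith
  have hstep : ∀ i, i < n - 1 → D i = 0 →
      (i + 2 < n - 1 → D (i + 2) = 0) ∧ (2 ≤ i → D (i - 2) = 0) := by
    intro i hi h0
    have hX : X (i + 1) = X i := sub_eq_zero.1 h0
    by_cases hi2 : 2 ≤ i
    · obtain ⟨k, rfl⟩ : ∃ k, i = k + 2 := ⟨i - 2, by omega⟩
      have hk0 := hD0 k (by omega)
      by_cases hc1 : k + 4 < n - 1
      · have a1 := hN (k + 2) k (k + 4) (by omega) (by omega) (by omega) (by omega)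
          (fun t ht => by omega)
        have a2 := hN (k + 3) (k + 1) (k + 5) (by omega) (by omega) (by omega) (by omega)
          (fun t ht => by omega)
        have hk4 := hD0 (k + 4) (by omega)
        have hsum : D k + D (k + 4) = 0 := by
          simp only [hD]
          rw [show k + 2 + 1 = k + 3 from rfl] at hX
          rw [hX] at a2
          rw [show k + 4 + 1 = k + 5 from rfl]
          linarith
        exact ⟨fun _ => by rw [show k + 2 + 2 = k + 4 from rfl]; linarith,
          fun _ => by rw [show k + 2 - 2 = k from rfl]; linarith⟩
      · refine ⟨fun h => by omega, fun _ => ?_⟩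
        rw [show k + 2 - 2 = k from rfl]
        rw [show k + 2 + 1 = k + 3 from rfl] at hX
        by_cases hc2 : k + 4 = n - 1
        · have a1 := hN (k + 2) k (k + 4) (by omega) (by omega) (by omega) (by omega)
            (fun t ht => by omega)
          have a2 := hN (k + 3) (k + 1) (k + 4) (by omega) (by omega) (by omega) (by omega)
            (fun t ht => by omega)
          rw [hX] at a2
          simp only [hD]
          linarith
        · have a1 := hN (k + 2) k (k + 3) (by omega) (by omega) (by omega) (by omega)
            (fun t ht => by omega)
          have a2 := hN (k + 3) (k + 1) (k + 2) (by omega) (by omega) (by omega) (by omega)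
            (fun t ht => by omega)
          rw [hX] at a2 a1
          simp only [hD]
          linarith
    · refine ⟨fun h => ?_, fun h => absurd h hi2⟩
      rcases (show i = 0 ∨ i = 1 by omega) with rfl | rfl
      · have a1 := hN 0 1 2 (by omega) (by omega) (by omega) (by omega) (fun t ht => by omega)
        have a2 := hN 1 0 3 (by omega) (by omega) (by omega) (by omega) (fun t ht => by omega)
        simp only [hD, zero_add] at hX ⊢
        rw [hX] at a2 a1
        norm_num
        linarith
      · have a1 := hN 1 0 3 (by omega) (by omega) (by omega) (by omega) (fun t ht => by omega)
        have a2 := hN 2 0 4 (by omega) (by omega) (by omega) (by omega) (fun t ht => by omega)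
        norm_num at hX
        simp only [hD]
        norm_num
        rw [hX] at a2
        linarith
  have hup : ∀ i, i < n - 1 → D i = 0 → ∀ k, i + 2 * k < n - 1 → D (i + 2 * k) = 0 := by
    intro i hi h0 k
    induction k with
    | zero => intro _; exact h0
    | succ k ih => intro h; exact (hstep _ (by omega) (ih (by omega))).1 h
  have hdown : ∀ i, i < n - 1 → D i = 0 → ∀ k, 2 * k ≤ i → D (i - 2 * k) = 0 := by
    intro i hi h0 k
    induction k with
    | zero => intro _; exact h0
    | succ k ih =>
      intro h
      have := (hstep _ (by omega) (ih (by omega))).2 (by omega)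
      rwa [Nat.sub_sub] at this
  have hall : ∀ i j, i < n - 1 → j < n - 1 → i % 2 = j % 2 → D i = 0 → D j = 0 := by
    intro i j hi hj hij h0
    rcases le_total i j with h | h
    · have := hup i hi h0 ((j - i) / 2) (by omega)
      rwa [show i + 2 * ((j - i) / 2) = j by omega] at this
    · have := hdown i hi h0 ((i - j) / 2) (by omega)
      rwa [show i - 2 * ((i - j) / 2) = j by omega] at this
  have hor : ¬ (D 0 = 0 ∧ D 1 = 0) := by
    rintro ⟨h0, h1⟩
    have hz : ∀ i, i < n - 1 → D i = 0 := by
      intro i hi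
      rcases (show i % 2 = 0 ∨ i % 2 = 1 by omega) with h | h
      · exact hall 0 i (by omega) hi (by omega) h0
      · exact hall 1 i (by omega) hi (by omega) h1
    have hc : ∀ i, i < n → X i = X 0 := by
      intro i
      induction i with
      | zero => intro _; rfl
      | succ i ih =>
        intro h
        rw [← ih (by omega)]
        exact sub_eq_zero.1 (hz i (by omega))
    have hX0 : X 0 = 0 := by
      rw [Finset.sum_congr rfl fun (i : Fin n) _ => hc i i.2] at hsum
      simp only [Finset.sum_const, Finset.card_univ, Fintype.card_fin, nsmul_eq_mul,
        mul_eq_zero, Nat.cast_eq_zero] at hsum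
      rcases hsum with h | h
      · omega
      · exact h
    exact hne (funext fun i => by rw [hc i i.2, hX0]; rfl)
  have hpos : ∀ π, π < 2 → D π ≠ 0 → ∀ i, i < n - 1 → i % 2 = π → 0 < D i := by
    intro π hπ h i hi hip
    refine lt_of_le_of_ne (hD0 i hi) fun h0 => h ?_
    exact hall i π hi (by omega) (by omega) h0.symm
  by_cases h0 : D 0 = 0
  · have h1 : D 1 ≠ 0 := fun h1 => hor ⟨h0, h1⟩
    exact ⟨1, by omega, fun i j hi hj hip hjp =>
      hfin i j hi hj (hpos 1 (by omega) h1 i hi hip) (hpos 1 (by omega) h1 j hj hjp)⟩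
  · exact ⟨0, by omega, fun i j hi hj hip hjp =>
      hfin i j hi hj (hpos 0 (by omega) h0 i hi hip) (hpos 0 (by omega) h0 j hj hjp)⟩

lemma prop4 (a b c d : Prop) (p1 : d ∨ b) (p2 : a ∨ c) (p3 : c ∨ b) (p4 : a ∨ d)
    (q1 : ¬ (a ∧ c ∧ d)) (q2 : ¬ (a ∧ c ∧ b)) (q3 : ¬ (a ∧ d ∧ b)) (q4 : ¬ (c ∧ d ∧ b)) :
    (a ∧ b ∧ ¬ c ∧ ¬ d) ∨ (¬ a ∧ ¬ b ∧ c ∧ d) := by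
  grind

set_option maxHeartbeats 4000000 in
lemma comb {n : ℕ} (hn : 4 ≤ n) (heven : n % 2 = 0) (G : SimpleGraph (Fin n)) (hG : NC G)
    (ε : ℕ) (hε : ε < 2)
    (hcov : ∀ i j, i < n - 1 → j < n - 1 → (i + ε) % 2 = 1 → (j + ε) % 2 = 1 →
      cov G i j = wt i j) :
    ∃ τ : Fin n ≃ Fin n, ∀ s t, G.Adj (τ s) (τ t) ↔ (Zg n).Adj s t ∨
      (((s : ℕ) + ε) / 2 = ((t : ℕ) + ε) / 2 ∧ G.Adj s t) := by
  classical
  obtain ⟨A, hAdef⟩ : ∃ A : ℕ → ℕ → Prop, ∀ s t, A s t ↔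
    ∃ (hs : s < n) (ht : t < n), G.Adj ⟨s, hs⟩ ⟨t, ht⟩ := ⟨_, fun _ _ => Iff.rfl⟩
  have hAG : ∀ s t : Fin n, G.Adj s t ↔ A s t := by
    intro s t
    rw [hAdef]
    exact ⟨fun h => ⟨s.2, t.2, h⟩, fun ⟨_, _, h⟩ => h⟩
  have hAs : ∀ s t, A s t → A t s := by
    intro s t
    simp only [hAdef]
    rintro ⟨h1, h2, h3⟩
    exact ⟨h2, h1, h3.symm⟩
  have hAi : ∀ s, ¬ A s s := by
    intro s
    simp only [hAdef]
    rintro ⟨h1, h2, h3⟩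
    exact G.loopless.irrefl _ h3
  have hAlt : ∀ s t, A s t → s < n ∧ t < n := by
    intro s t
    simp only [hAdef]
    rintro ⟨h1, h2, h3⟩
    exact ⟨h1, h2⟩
  have hNC : ∀ (v : ℕ) (S : ℕ → Prop) (u w : ℕ), v < n → u < n → w < n → S u → ¬ S w → u ≠ v →
      w ≠ v → ∃ a b, A a b ∧ S a ∧ ¬ S b ∧ a ≠ v ∧ b ≠ v := by
    intro v S u w hv hu hw h1 h2 h3 h4
    obtain ⟨a, b, h5, h6, h7, h8, h9⟩ := hG ⟨v, hv⟩ (fun z => S z) ⟨u, hu⟩ ⟨w, hw⟩ h1 h2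
      (by simpa using h3) (by simpa using h4)
    exact ⟨a, b, (hAG _ _).1 h5, h6, h7, fun h => h8 (Fin.ext h), fun h => h9 (Fin.ext h)⟩
  have hA : ∀ s t, A s t → (t + ε) / 2 ≤ (s + ε) / 2 + 1 := by
    intro s t hst
    by_contra hc
    push Not at hc
    have hlt := hAlt s t hst
    set i := 2 * ((s + ε) / 2) + 1 - ε with hi
    have h0 := hcov i (i + 2) (by omega) (by omega) (by omega) (by omega)
    have h1 : wt i (i + 2) = 0 := by
      unfold wt
      rw [if_neg (by omega), if_neg (by omega)]
    rw [h1, cov, Finset.card_eq_zero, Finset.filter_eq_empty_iff] at h0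
    refine h0 (Finset.mem_univ (⟨s, hlt.1⟩, ⟨t, hlt.2⟩)) ⟨(hAG _ _).2 hst, ?_⟩
    dsimp only
    omega
  have h3 : ∀ i, i < n - 1 → (i + ε) % 2 = 1 → ∀ a a' b b' c c', A a a' → A b b' → A c c' →
      a ≤ i → b ≤ i → c ≤ i → i < a' → i < b' → i < c' → (a ≠ b ∨ a' ≠ b') →
      (a ≠ c ∨ a' ≠ c') → (b ≠ c ∨ b' ≠ c') → False := by
    intro i hi hip a a' b b' c c' ha hb hc h1 h2 h3 h4 h5 h6 h7 h8 h9
    have h0 := hcov i i hi hi hip hip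
    have hw : wt i i = 2 := by unfold wt; simp
    rw [hw, cov] at h0
    refine absurd (Finset.two_lt_card.2 ⟨(⟨a, (hAlt _ _ ha).1⟩, ⟨a', (hAlt _ _ ha).2⟩), ?_,
      (⟨b, (hAlt _ _ hb).1⟩, ⟨b', (hAlt _ _ hb).2⟩), ?_,
      (⟨c, (hAlt _ _ hc).1⟩, ⟨c', (hAlt _ _ hc).2⟩), ?_, ?_, ?_, ?_⟩) h0.le.not_gt
    · exact Finset.mem_filter.2 ⟨Finset.mem_univ _, (hAG _ _).2 ha, h1, h4, h1, h4⟩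
    · exact Finset.mem_filter.2 ⟨Finset.mem_univ _, (hAG _ _).2 hb, h2, h5, h2, h5⟩
    · exact Finset.mem_filter.2 ⟨Finset.mem_univ _, (hAG _ _).2 hc, h3, h6, h3, h6⟩
    · simp only [ne_eq, Prod.mk.injEq, Fin.mk.injEq]; omega
    · simp only [ne_eq, Prod.mk.injEq, Fin.mk.injEq]; omega
    · simp only [ne_eq, Prod.mk.injEq, Fin.mk.injEq]; omega
  have hX : ∀ i, i < n - 1 → (i + ε) % 2 = 1 → ∀ v u w, v < n → w < n → u ≤ i → i < w → u ≠ v →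
      w ≠ v → ∃ a b, A a b ∧ i ≤ a + 1 ∧ a ≤ i ∧ i + 1 ≤ b ∧ b ≤ i + 2 ∧ a ≠ v ∧ b ≠ v := by
    intro i hi hip v u w hv hw hu hiw huv hwv
    obtain ⟨a, b, h5, h6, h7, h8, h9⟩ := hNC v (fun z => z ≤ i) u w hv (by omega) hw hu
      (by omega) huv hwv
    have := hA a b h5
    exact ⟨a, b, h5, by omega, h6, by omega, by omega, h8, h9⟩
  have hM : ∀ j, j + 3 < n → (j + ε) % 2 = 0 →
      (A j (j + 2) ∧ A (j + 1) (j + 3) ∧ ¬ A j (j + 3) ∧ ¬ A (j + 1) (j + 2)) ∨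
      (¬ A j (j + 2) ∧ ¬ A (j + 1) (j + 3) ∧ A j (j + 3) ∧ A (j + 1) (j + 2)) := by
    intro j hj hjp
    have p1 : A (j + 1) (j + 2) ∨ A (j + 1) (j + 3) := by
      obtain ⟨a, b, h, h1, h2, h3, h4, h5, h6⟩ := hX (j + 1) (by omega) (by omega) j (j + 1)
        (j + 2) (by omega) (by omega) (by omega) (by omega) (by omega) (by omega)
      obtain rfl : a = j + 1 := by omega
      rcases (show b = j + 2 ∨ b = j + 3 by omega) with rfl | rfl <;> tauto
    have p2 : A j (j + 2) ∨ A j (j + 3) := by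
      obtain ⟨a, b, h, h1, h2, h3, h4, h5, h6⟩ := hX (j + 1) (by omega) (by omega) (j + 1) j
        (j + 2) (by omega) (by omega) (by omega) (by omega) (by omega) (by omega)
      obtain rfl : a = j := by omega
      rcases (show b = a + 2 ∨ b = a + 3 by omega) with rfl | rfl <;> tauto
    have p3 : A j (j + 3) ∨ A (j + 1) (j + 3) := by
      obtain ⟨a, b, h, h1, h2, h3, h4, h5, h6⟩ := hX (j + 1) (by omega) (by omega) (j + 2) j
        (j + 3) (by omega) (by omega) (by omega) (by omega) (by omega) (by omega)
      obtain rfl : b = j + 3 := by omega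
      rcases (show a = j ∨ a = j + 1 by omega) with rfl | rfl <;> tauto
    have p4 : A j (j + 2) ∨ A (j + 1) (j + 2) := by
      obtain ⟨a, b, h, h1, h2, h3, h4, h5, h6⟩ := hX (j + 1) (by omega) (by omega) (j + 3) j
        (j + 2) (by omega) (by omega) (by omega) (by omega) (by omega) (by omega)
      obtain rfl : b = j + 2 := by omega
      rcases (show a = j ∨ a = j + 1 by omega) with rfl | rfl <;> tauto
    have q := h3 (j + 1) (by omega) (by omega)
    have q1 : ¬ (A j (j + 2) ∧ A j (j + 3) ∧ A (j + 1) (j + 2)) := fun ⟨a, b, c⟩ =>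
      q _ _ _ _ _ _ a b c (by omega) (by omega) (by omega) (by omega) (by omega) (by omega)
        (by omega) (by omega) (by omega)
    have q2 : ¬ (A j (j + 2) ∧ A j (j + 3) ∧ A (j + 1) (j + 3)) := fun ⟨a, b, c⟩ =>
      q _ _ _ _ _ _ a b c (by omega) (by omega) (by omega) (by omega) (by omega) (by omega)
        (by omega) (by omega) (by omega)
    have q3 : ¬ (A j (j + 2) ∧ A (j + 1) (j + 2) ∧ A (j + 1) (j + 3)) := fun ⟨a, b, c⟩ =>
      q _ _ _ _ _ _ a b c (by omega) (by omega) (by omega) (by omega) (by omega) (by omega)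
        (by omega) (by omega) (by omega)
    have q4 : ¬ (A j (j + 3) ∧ A (j + 1) (j + 2) ∧ A (j + 1) (j + 3)) := fun ⟨a, b, c⟩ =>
      q _ _ _ _ _ _ a b c (by omega) (by omega) (by omega) (by omega) (by omega) (by omega)
        (by omega) (by omega) (by omega)
    exact prop4 _ _ _ _ p1 p2 p3 p4 q1 q2 q3 q4
  have hends1 : ε = 1 → A 0 1 ∧ A 0 2 ∧ A (n - 2) (n - 1) ∧ A (n - 3) (n - 1) := by
    intro h1
    refine ⟨?_, ?_, ?_, ?_⟩
    · obtain ⟨a, b, h, h1, h2, h3, h4, h5, h6⟩ := hX 0 (by omega) (by omega) 2 0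
        1 (by omega) (by omega) (by omega) (by omega) (by omega) (by omega)
      obtain rfl : a = 0 := by omega
      obtain rfl : b = 1 := by omega
      exact h
    · obtain ⟨a, b, h, h1, h2, h3, h4, h5, h6⟩ := hX 0 (by omega) (by omega) 1 0
        2 (by omega) (by omega) (by omega) (by omega) (by omega) (by omega)
      obtain rfl : a = 0 := by omega
      obtain rfl : b = 2 := by omega
      exact h
    · obtain ⟨a, b, h, h1, h2, h3, h4, h5, h6⟩ := hX (n - 2) (by omega) (by omega) (n - 3) (n - 2)
        (n - 1) (by omega) (by omega) (by omega) (by omega) (by omega) (by omega)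
      have := hAlt _ _ h
      obtain rfl : a = n - 2 := by omega
      obtain rfl : b = n - 1 := by omega
      exact h
    · obtain ⟨a, b, h, h1, h2, h3, h4, h5, h6⟩ := hX (n - 2) (by omega) (by omega) (n - 2) (n - 3)
        (n - 1) (by omega) (by omega) (by omega) (by omega) (by omega) (by omega)
      have := hAlt _ _ h
      obtain rfl : a = n - 3 := by omega
      obtain rfl : b = n - 1 := by omega
      exact h
  have hends0 : ε = 0 → A 0 1 ∧ A (n - 2) (n - 1) := by
    rintro rfl
    have m0 := hM 0 (by omega) (by omega)
    have m1 := hM (n - 4) (by omega) (by omega)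
    rw [show n - 4 + 1 = n - 3 by omega, show n - 4 + 2 = n - 2 by omega,
      show n - 4 + 3 = n - 1 by omega] at m1
    simp only [zero_add] at m0
    constructor
    · obtain ⟨m, m', hm, hm'⟩ : ∃ m m', ¬ A 0 m' ∧ ((m = 2 ∧ m' = 3) ∨ (m = 3 ∧ m' = 2)) := by
        rcases m0 with h | h
        · exact ⟨2, 3, h.2.2.1, Or.inl ⟨rfl, rfl⟩⟩
        · exact ⟨3, 2, h.1, Or.inr ⟨rfl, rfl⟩⟩
      obtain ⟨a, b, h, h1, h2, h3, h4⟩ := hNC m (fun z => z = 0) 0 1 (by omega) (by omega)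
        (by omega) rfl (by omega) (by omega) (by omega)
      obtain rfl : a = 0 := h1
      have := hA _ _ h
      have hb : b ≠ m' := by rintro rfl; exact hm h
      obtain rfl : b = 1 := by omega
      exact h
    · obtain ⟨m, m', hm, hm'⟩ : ∃ m m', ¬ A m' (n - 1) ∧
          ((m = n - 4 ∧ m' = n - 3) ∨ (m = n - 3 ∧ m' = n - 4)) := by
        rcases m1 with h | h
        · exact ⟨n - 3, n - 4, h.2.2.1, Or.inr ⟨rfl, rfl⟩⟩
        · exact ⟨n - 4, n - 3, h.2.1, Or.inl ⟨rfl, rfl⟩⟩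
      obtain ⟨a, b, h, h1, h2, h3, h4⟩ := hNC m (fun z => z = n - 1) (n - 1) (n - 2) (by omega)
        (by omega) (by omega) rfl (by omega) (by omega) (by omega)
      obtain rfl : a = n - 1 := h1
      have h' := hAs _ _ h
      have := hA _ _ h'
      have := hAlt _ _ h'
      have hb : b ≠ m' := by rintro rfl; exact hm h'
      obtain rfl : b = n - 2 := by omega
      exact h'
  -- swap flags
  obtain ⟨bb, hbb⟩ : ∃ bb : ℕ → Prop, ∀ L, bb (L + 1) ↔
      ¬ (bb L ↔ A (2 * L - ε) (2 * L - ε + 3)) :=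
    ⟨fun L => Nat.rec False (fun L p => ¬ (p ↔ A (2 * L - ε) (2 * L - ε + 3))) L,
      fun L => Iff.rfl⟩
  obtain ⟨tn, htn⟩ : ∃ tn : ℕ → ℕ, ∀ s, tn s =
      if bb ((s + ε) / 2) ∧ (ε = 0 ∨ (s ≠ 0 ∧ s + 1 ≠ n)) then
        (if (s + ε) % 2 = 0 then s + 1 else s - 1) else s := ⟨_, fun _ => rfl⟩
  have t1 : ∀ L j, j + ε = 2 * L → j + 1 < n → bb L → tn j = j + 1 ∧ tn (j + 1) = j := by
    intro L j hj hjn hb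
    have e1 : (j + ε) / 2 = L := by omega
    have e2 : (j + 1 + ε) / 2 = L := by omega
    have c1 : bb ((j + ε) / 2) ∧ (ε = 0 ∨ (j ≠ 0 ∧ j + 1 ≠ n)) := ⟨by rwa [e1], by omega⟩
    have c2 : bb ((j + 1 + ε) / 2) ∧ (ε = 0 ∨ (j + 1 ≠ 0 ∧ j + 1 + 1 ≠ n)) :=
      ⟨by rwa [e2], by omega⟩
    have c3 : (j + ε) % 2 = 0 := by omega
    have c4 : ¬ (j + 1 + ε) % 2 = 0 := by omega
    constructor
    · rw [htn, if_pos c1, if_pos c3]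
    · rw [htn, if_pos c2, if_neg c4]; rfl
  have t2 : ∀ s, ¬ bb ((s + ε) / 2) → tn s = s := by
    intro s h
    rw [htn, if_neg fun h' => h h'.1]
  have t3 : ε = 1 → tn 0 = 0 ∧ tn (n - 1) = n - 1 := by
    intro h
    rw [htn, htn, if_neg (by omega), if_neg (by omega)]
    exact ⟨rfl, rfl⟩
  have tlev : ∀ s, s < n → tn s < n ∧ (tn s + ε) / 2 = (s + ε) / 2 ∧ tn (tn s) = s := by
    intro s hs
    by_cases hb : bb ((s + ε) / 2)
    · by_cases hv : ε = 0 ∨ (s ≠ 0 ∧ s + 1 ≠ n)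
      · rcases (show (s + ε) % 2 = 0 ∨ (s + ε) % 2 = 1 by omega) with h | h
        · have := t1 _ s (by omega) (by omega) hb
          rw [this.1, this.2]
          omega
        · obtain ⟨j, rfl⟩ : ∃ j, s = j + 1 := ⟨s - 1, by omega⟩
          have := t1 _ j (by omega) (by omega) hb
          rw [this.2, this.1]
          omega
      · rcases (show (ε = 1 ∧ s = 0) ∨ (ε = 1 ∧ s = n - 1) by omega) with ⟨h, rfl⟩ | ⟨h, rfl⟩
        · rw [(t3 h).1, (t3 h).1]; exact ⟨hs, rfl, rfl⟩
        · rw [(t3 h).2, (t3 h).2]; exact ⟨hs, rfl, rfl⟩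
    · rw [t2 s hb, t2 s hb]
      exact ⟨hs, rfl, rfl⟩
  obtain ⟨zg, hzg⟩ : ∃ zg : ℕ → ℕ → Prop, ∀ a b, zg a b ↔ (a + 2 = b ∨ b + 2 = a ∨
    (a = 0 ∧ b = 1) ∨ (a = 1 ∧ b = 0) ∨ (a + 1 = b ∧ b + 1 = n) ∨ (b + 1 = a ∧ a + 1 = n)) :=
    ⟨_, fun _ _ => Iff.rfl⟩
  have main : ∀ s t, s < n → t < n → (s + ε) / 2 ≤ (t + ε) / 2 →
      (A (tn s) (tn t) ↔ zg s t ∨ ((s + ε) / 2 = (t + ε) / 2 ∧ A s t)) := by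
    intro s t hs ht hst
    have ls := tlev s hs
    have lt := tlev t ht
    have hAc : ∀ a b, A a b ↔ A b a := fun a b => ⟨hAs a b, hAs b a⟩
    rcases (show (s + ε) / 2 = (t + ε) / 2 ∨ (t + ε) / 2 = (s + ε) / 2 + 1 ∨
      (s + ε) / 2 + 2 ≤ (t + ε) / 2 by omega) with h | h | h
    · -- same level
      have hz : zg s t → A s t := by
        intro hz
        rw [hzg] at hz
        have h0 : ε = 0 := by omega
        have := hends0 h0
        rcases (show (s = 0 ∧ t = 1) ∨ (s = 1 ∧ t = 0) ∨ (s = n - 2 ∧ t = n - 1) ∨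
          (s = n - 1 ∧ t = n - 2) by omega) with ⟨rfl, rfl⟩ | ⟨rfl, rfl⟩ | ⟨rfl, rfl⟩ | ⟨rfl, rfl⟩
        · exact this.1
        · exact hAs _ _ this.1
        · exact this.2
        · exact hAs _ _ this.2
      have goal : A (tn s) (tn t) ↔ A s t := by
        by_cases hb : bb ((s + ε) / 2)
        · rcases (show s = t ∨ t = s + 1 ∨ s = t + 1 by omega) with rfl | rfl | rfl
          · exact iff_of_false (hAi _) (hAi _)
          · have := t1 _ s (by omega) (by omega) hb
            rw [this.1, this.2, hAc]
          · have := t1 _ t (by omega) (by omega) hb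
            rw [this.1, this.2, hAc]
        · rw [t2 s hb, t2 t (by rwa [← h])]
      rw [goal]
      exact ⟨fun h' => Or.inr ⟨h, h'⟩, fun h' => h'.elim hz fun h'' => h''.2⟩
    · by_cases hs0 : ε = 1 ∧ s = 0
      · obtain ⟨h1, rfl⟩ := hs0
        have e := hends1 h1
        rw [(t3 h1).1]
        refine iff_of_true ?_ (Or.inl ((hzg _ _).2 (by omega)))
        rcases (show tn t = 1 ∨ tn t = 2 by omega) with h2 | h2 <;> rw [h2]
        · exact e.1
        · exact e.2.1
      · by_cases ht0 : ε = 1 ∧ t = n - 1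
        · obtain ⟨h1, rfl⟩ := ht0
          have e := hends1 h1
          rw [(t3 h1).2]
          refine iff_of_true ?_ (Or.inl ((hzg _ _).2 (by omega)))
          rcases (show tn s = n - 2 ∨ tn s = n - 3 by omega) with h2 | h2 <;> rw [h2]
          · exact e.2.2.1
          · exact e.2.2.2
        · obtain ⟨j, hj⟩ : ∃ j, j + ε = 2 * ((s + ε) / 2) := ⟨2 * ((s + ε) / 2) - ε, by omega⟩
          set L := (s + ε) / 2 with hL
          have m := hM j (by omega) (by omega)
          have hbL := hbb L
          rw [show 2 * L - ε = j by omega] at hbL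
          have r2 : ¬ bb L → tn j = j ∧ tn (j + 1) = j + 1 := fun hb =>
            ⟨t2 _ (by rwa [show (j + ε) / 2 = L by omega]),
              t2 _ (by rwa [show (j + 1 + ε) / 2 = L by omega])⟩
          have r2' : ¬ bb (L + 1) → tn (j + 2) = j + 2 ∧ tn (j + 3) = j + 3 := fun hb =>
            ⟨t2 _ (by rwa [show (j + 2 + ε) / 2 = L + 1 by omega]),
              t2 _ (by rwa [show (j + 3 + ε) / 2 = L + 1 by omega])⟩
          have r1 := t1 L j hj (by omega)
          have r1' := t1 (L + 1) (j + 2) (by omega) (by omega)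
          have hno : ¬ (L = (t + ε) / 2 ∧ A s t) := by rintro ⟨h1, -⟩; omega
          have hz : zg s t ↔ t = s + 2 := by rw [hzg]; omega
          rw [hz, or_iff_left hno]
          have hs' : s = j ∨ s = j + 1 := by omega
          have ht' : t = j + 2 ∨ t = j + 3 := by omega
          clear_value L
          rw [show j + 2 + 1 = j + 3 from rfl] at r1'
          have fin : ∀ (x y : ℕ), tn s = x → tn t = y → ((A x y) ↔ t = s + 2) →
              (A (tn s) (tn t) ↔ t = s + 2) := by
            intro x y hx hy h; rw [hx, hy]; exact h
          by_cases hb : bb L <;> by_cases hb' : bb (L + 1)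
          · have hc : ¬ A j (j + 3) := fun hc => hbL.1 hb' (iff_of_true hb hc)
            have F := m.resolve_right fun h => hc h.2.2.1
            have u := r1 hb
            have u' := r1' hb'
            rcases hs' with rfl | rfl <;> rcases ht' with rfl | rfl
            · exact fin _ _ u.1 u'.1 (iff_of_true F.2.1 (by omega))
            · exact fin _ _ u.1 u'.2 (iff_of_false F.2.2.2 (by omega))
            · exact fin _ _ u.2 u'.1 (iff_of_false F.2.2.1 (by omega))
            · exact fin _ _ u.2 u'.2 (iff_of_true F.1 (by omega))
          · have hc : A j (j + 3) := by
              by_contra hc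
              exact hb' (hbL.2 fun h => hc (h.1 hb))
            have F := m.resolve_left fun h => h.2.2.1 hc
            have u := r1 hb
            have u' := r2' hb'
            rcases hs' with rfl | rfl <;> rcases ht' with rfl | rfl
            · exact fin _ _ u.1 u'.1 (iff_of_true F.2.2.2 (by omega))
            · exact fin _ _ u.1 u'.2 (iff_of_false F.2.1 (by omega))
            · exact fin _ _ u.2 u'.1 (iff_of_false F.1 (by omega))
            · exact fin _ _ u.2 u'.2 (iff_of_true F.2.2.1 (by omega))
          · have hc : A j (j + 3) := by
              by_contra hc
              exact hbL.1 hb' (iff_of_false hb hc)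
            have F := m.resolve_left fun h => h.2.2.1 hc
            have u := r2 hb
            have u' := r1' hb'
            rcases hs' with rfl | rfl <;> rcases ht' with rfl | rfl
            · exact fin _ _ u.1 u'.1 (iff_of_true F.2.2.1 (by omega))
            · exact fin _ _ u.1 u'.2 (iff_of_false F.1 (by omega))
            · exact fin _ _ u.2 u'.1 (iff_of_false F.2.1 (by omega))
            · exact fin _ _ u.2 u'.2 (iff_of_true F.2.2.2 (by omega))
          · have hc : ¬ A j (j + 3) := fun hc => hb' (hbL.2 fun h => hb (h.2 hc))
            have F := m.resolve_right fun h => hc h.2.2.1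
            have u := r2 hb
            have u' := r2' hb'
            rcases hs' with rfl | rfl <;> rcases ht' with rfl | rfl
            · exact fin _ _ u.1 u'.1 (iff_of_true F.1 (by omega))
            · exact fin _ _ u.1 u'.2 (iff_of_false F.2.2.1 (by omega))
            · exact fin _ _ u.2 u'.1 (iff_of_false F.2.2.2 (by omega))
            · exact fin _ _ u.2 u'.2 (iff_of_true F.2.1 (by omega))
    · refine iff_of_false (fun h' => ?_) ?_
      · have := hA _ _ h'
        omega
      · rw [hzg]
        omega
  have hinv : Function.Involutive (fun s : Fin n => (⟨tn s, (tlev s s.2).1⟩ : Fin n)) := by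
    intro s
    ext
    exact (tlev s s.2).2.2
  refine ⟨hinv.toPerm, fun s t => ?_⟩
  rw [hAG, hAG]
  change A (tn s) (tn t) ↔ _
  have hz : ∀ s t : Fin n, (Zg n).Adj s t ↔ zg s t := by
    intro s t; rw [hzg]; rfl
  rw [hz]
  rcases le_total (((s : ℕ) + ε) / 2) (((t : ℕ) + ε) / 2) with h | h
  · exact main s t s.2 t.2 h
  · have := main t s t.2 s.2 h
    have hAc : ∀ a b, A a b ↔ A b a := fun a b => ⟨hAs a b, hAs b a⟩
    rw [hAc, this, hAc t s, ← hz, ← hz, (Zg n).adj_comm, eq_comm]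

lemma chords {n : ℕ} (K : SimpleGraph (Fin n)) (Ds : Finset ℕ) (g : ℕ → ℕ)
    (h : ∀ p q : Fin n, K.Adj p q ↔ (cycleGraph n).Adj p q ∨ (p ≠ q ∧ ∃ k ∈ Ds,
      ((p : ℕ) = k ∧ (q : ℕ) = g k) ∨ ((q : ℕ) = k ∧ (p : ℕ) = g k))) :
    K = cyclePlusChords n Ds.card (fun j => (Ds.orderEmbOfFin rfl j, g (Ds.orderEmbOfFin rfl j)))
    := by
  ext p q
  rw [h]
  unfold cyclePlusChords
  rw [sup_adj, fromEdgeSet_adj]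
  refine or_congr Iff.rfl ?_
  rw [and_comm]
  refine and_congr ?_ Iff.rfl
  constructor
  · rintro ⟨k, hk, h1⟩
    have : k ∈ Set.range (Ds.orderEmbOfFin rfl) := by
      rw [Finset.range_orderEmbOfFin]; exact hk
    obtain ⟨j, rfl⟩ := this
    rcases h1 with h1 | h1
    · exact ⟨j, p, q, h1.1, h1.2, rfl⟩
    · exact ⟨j, q, p, h1.1, h1.2, Sym2.eq_swap⟩
  · rintro ⟨j, a, b, ha, hb, he⟩
    refine ⟨_, Ds.orderEmbOfFin_mem rfl j, ?_⟩
    rcases Sym2.eq_iff.1 he with ⟨rfl, rfl⟩ | ⟨rfl, rfl⟩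
    · exact Or.inl ⟨ha, hb⟩
    · exact Or.inr ⟨ha, hb⟩

lemma final {n : ℕ} (hn : 4 ≤ n) (heven : n % 2 = 0) (G : SimpleGraph (Fin n))
    (ε : ℕ) (hε : ε < 2) (τ : Fin n ≃ Fin n)
    (hτ : ∀ s t, G.Adj (τ s) (τ t) ↔ (Zg n).Adj s t ∨
      (((s : ℕ) + ε) / 2 = ((t : ℕ) + ε) / 2 ∧ G.Adj s t)) :
    Nonempty (G ≃g SimpleGraph.cycleGraph n) ∨
      (∃ (k : ℕ) (i : Fin k → ℕ), 1 ≤ k ∧ Monotone i ∧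
        (∀ j, 1 ≤ i j ∧ i j ≤ (n - 2) / 2) ∧ Nonempty (G ≃g H12 n k i)) ∨
      (∃ (s : ℕ) (j : Fin s → ℕ), 1 ≤ s ∧ Monotone j ∧
        (∀ t, 1 ≤ j t ∧ j t ≤ (n - 4) / 2) ∧ Nonempty (G ≃g H3 n s j)) := by
  classical
  let K : SimpleGraph (Fin n) := G.comap ((pos n).trans τ)
  have eK : K ≃g G := Iso.comap _ G
  let A : Fin n → Fin n → Prop := fun p q => G.Adj (pos n p) (pos n q)
  have hAs : ∀ p q, A p q → A q p := fun p q h => G.symm.symm _ _ h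
  have hAi : ∀ p q, A p q → p ≠ q := by
    rintro p q h rfl
    exact G.loopless.irrefl _ h
  have hK : ∀ p q, K.Adj p q ↔ (cycleGraph n).Adj p q ∨
      ((((pos n p : Fin n) : ℕ) + ε) / 2 = (((pos n q : Fin n) : ℕ) + ε) / 2 ∧ A p q) := by
    intro p q
    have : K.Adj p q ↔ G.Adj (τ (pos n p)) (τ (pos n q)) := Iff.rfl
    rw [this, hτ]
    refine or_congr ?_ Iff.rfl
    exact (posIso hn).map_adj_iff
  have hpos : ∀ p : Fin n, ((pos n p : Fin n) : ℕ) = if 2 * (p : ℕ) < n then 2 * (p : ℕ) else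
    2 * (n - p) - 1 := fun p => rfl
  -- chord index set
  let g : ℕ → ℕ := fun k => if ε = 1 then n - k else n - k - 1
  let top : ℕ := if ε = 1 then (n - 2) / 2 else (n - 4) / 2
  let Ds : Finset ℕ := (Finset.Icc 1 top).filter fun k =>
    ∃ p q : Fin n, (p : ℕ) = k ∧ (q : ℕ) = g k ∧ A p q
  have hDs : K = cyclePlusChords n Ds.card
      (fun j => (Ds.orderEmbOfFin rfl j, g (Ds.orderEmbOfFin rfl j))) := by
    apply chords
    intro p q
    rw [hK]
    have key : ∀ p q : Fin n, (p : ℕ) < q → A p q →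
        (((pos n p : Fin n) : ℕ) + ε) / 2 = (((pos n q : Fin n) : ℕ) + ε) / 2 →
        (cycleGraph n).Adj p q ∨ ((p : ℕ) ∈ Ds ∧ (q : ℕ) = g p) := by
      intro p q hpq hA hl
      rw [cyc_adj]
      have hp := p.2
      have hq := q.2
      rw [hpos, hpos] at hl
      have hq2 : (q : ℕ) = g p := by
        simp only [g]
        split_ifs at hl ⊢ <;> omega
      by_cases hc : 1 ≤ (p : ℕ) ∧ (p : ℕ) ≤ top
      · exact Or.inr ⟨Finset.mem_filter.2 ⟨Finset.mem_Icc.2 hc, p, q, rfl, hq2, hA⟩, hq2⟩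
      · left
        simp only [g, top] at hc hq2
        split_ifs at hl hc hq2 <;> omega
    constructor
    · rintro (h | ⟨hl, hA⟩)
      · exact Or.inl h
      · have hne := hAi _ _ hA
        rcases lt_trichotomy (p : ℕ) (q : ℕ) with h | h | h
        · rcases key p q h hA hl with h1 | h1
          · exact Or.inl h1
          · exact Or.inr ⟨hne, p, h1.1, Or.inl ⟨rfl, h1.2⟩⟩
        · exact absurd (Fin.ext h) hne
        · rcases key q p h (hAs _ _ hA) hl.symm with h1 | h1
          · exact Or.inl h1.symm
          · exact Or.inr ⟨hne, q, h1.1, Or.inr ⟨rfl, h1.2⟩⟩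
    · have key2 : ∀ p q : Fin n, (p : ℕ) ∈ Ds → (q : ℕ) = g p →
          (((pos n p : Fin n) : ℕ) + ε) / 2 = (((pos n q : Fin n) : ℕ) + ε) / 2 ∧ A p q := by
        intro p q hp hq
        obtain ⟨h1, a, b, h2, h3, h4⟩ := Finset.mem_filter.1 hp
        obtain rfl : a = p := Fin.ext h2
        obtain rfl : b = q := Fin.ext (h3.trans hq.symm)
        refine ⟨?_, h4⟩
        rw [Finset.mem_Icc] at h1
        have hp := a.2
        have hq := b.2
        rw [hpos, hpos]
        simp only [g, top] at h1 h3
        split_ifs at h1 h3 ⊢ <;> omega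
      rintro (h | ⟨hne, k, hk, ⟨rfl, h2⟩ | ⟨rfl, h2⟩⟩)
      · exact Or.inl h
      · exact Or.inr (key2 p q hk h2)
      · have := key2 q p hk h2
        exact Or.inr ⟨this.1.symm, hAs _ _ this.2⟩
  have iso : Nonempty (G ≃g cyclePlusChords n Ds.card
      (fun j => (Ds.orderEmbOfFin rfl j, g (Ds.orderEmbOfFin rfl j)))) := by
    rw [← hDs]
    exact ⟨eK.symm⟩
  have hb : ∀ j, 1 ≤ Ds.orderEmbOfFin rfl j ∧ Ds.orderEmbOfFin rfl j ≤ top := fun j =>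
    Finset.mem_Icc.1 (Finset.mem_filter.1 (Ds.orderEmbOfFin_mem rfl j)).1
  by_cases hcard : Ds.card = 0
  · left
    have : K = cycleGraph n := by
      rw [hDs]
      ext p q
      unfold cyclePlusChords
      rw [sup_adj, fromEdgeSet_adj]
      constructor
      · rintro (h | ⟨⟨j, -⟩, -⟩)
        · exact h
        · have := j.2; omega
      · exact Or.inl
    rw [← this]
    exact ⟨eK.symm⟩
  · right
    rcases (show ε = 1 ∨ ε = 0 by omega) with h | h
    · left
      refine ⟨Ds.card, fun j => Ds.orderEmbOfFin rfl j, by omega,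
        (Ds.orderEmbOfFin rfl).monotone, fun j => ?_, ?_⟩
      · have := hb j
        simpa only [top, if_pos h] using this
      · simp only [g, if_pos h] at iso
        exact iso
    · right
      have h' : ¬ ε = 1 := by omega
      refine ⟨Ds.card, fun j => Ds.orderEmbOfFin rfl j, by omega,
        (Ds.orderEmbOfFin rfl).monotone, fun j => ?_, ?_⟩
      · have := hb j
        simpa only [top, if_neg h'] using this
      · simp only [g, if_neg h'] at iso
        exact iso

end TwoConnEven

theorem twoConnected_even_equality_characterization
    {V : Type*} [Fintype V] [DecidableEq V] {n : ℕ}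
    (G : SimpleGraph V) (hcard : Fintype.card V = n) (heven : Even n) (hn : 4 ≤ n)
    (hG : TwoConnected G) (heq : algCon G = algCon (SimpleGraph.cycleGraph n)) :
    Nonempty (G ≃g SimpleGraph.cycleGraph n) ∨
      (∃ (k : ℕ) (i : Fin k → ℕ), 1 ≤ k ∧ Monotone i ∧
        (∀ j, 1 ≤ i j ∧ i j ≤ (n - 2) / 2) ∧ Nonempty (G ≃g H12 n k i)) ∨
      (∃ (s : ℕ) (j : Fin s → ℕ), 1 ≤ s ∧ Monotone j ∧
        (∀ t, 1 ≤ j t ∧ j t ≤ (n - 4) / 2) ∧ Nonempty (G ≃g H3 n s j)) := by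
  classical
  obtain ⟨x, hx0, hxs, hxE⟩ := TwoConnEven.exists_min G hG.1
  -- sort the vertices
  let e0 : Fin n ≃ V := (Fintype.equivFinOfCardEq hcard).symm
  let σ : Fin n ≃ V := (Tuple.sort (x ∘ e0)).trans e0
  have hσ : Monotone (x ∘ σ) := Tuple.monotone_sort (x ∘ e0)
  let G' : SimpleGraph (Fin n) := G.comap σ
  let eG : G' ≃g G := SimpleGraph.Iso.comap σ G
  have hNC : TwoConnEven.NC G' := TwoConnEven.NC_iso eG (TwoConnEven.NC_of hG)
  let X : ℕ → ℝ := fun k => if h : k < n then x (σ ⟨k, h⟩) else 0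
  have hX : ∀ i : Fin n, X i = x (σ i) := fun i => by simp [X]
  have hX' : (fun i : Fin n => X i) = fun i => x (σ i) := funext hX
  have hmono : ∀ i, i + 1 < n → X i ≤ X (i + 1) := by
    intro i hi
    have := hσ (show (⟨i, by omega⟩ : Fin n) ≤ ⟨i + 1, hi⟩ by simp [Fin.le_def])
    have h1 := hX ⟨i, by omega⟩
    have h2 := hX ⟨i + 1, hi⟩
    simp only at h1 h2
    rw [h1, h2]
    exact this
  have hsum : ∑ i : Fin n, X i = 0 := by
    rw [← hxs, Finset.sum_congr rfl fun i _ => hX i]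
    exact Equiv.sum_comp σ x
  have hne : (fun i : Fin n => X i) ≠ 0 := by
    rw [hX']
    intro h
    apply hx0
    funext v
    have := congrFun h (σ.symm v)
    simpa using this
  have hl : ∀ y : Fin n → ℝ, ∑ v, y v = 0 →
      algCon G * ∑ v, (y v) ^ 2 ≤ TwoConnEven.En (TwoConnEven.Zg n) y := by
    intro y hy
    rw [heq, ← TwoConnEven.En_iso (TwoConnEven.posIso hn) y,
      ← Equiv.sum_comp (TwoConnEven.posIso hn).toEquiv fun v => (y v) ^ 2]
    refine TwoConnEven.algCon_le _ (fun v => y (TwoConnEven.posIso hn v)) ?_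
    rw [← hy]
    exact Equiv.sum_comp (TwoConnEven.posIso hn).toEquiv y
  have hE : TwoConnEven.En G' (fun i => X i) = algCon G * ∑ i : Fin n, (X i) ^ 2 := by
    rw [hX', Finset.sum_congr rfl fun i _ => by rw [hX i],
      Equiv.sum_comp σ fun v => (x v) ^ 2, ← hxE]
    exact TwoConnEven.En_iso eG x
  obtain ⟨π, hπ, hcov⟩ := TwoConnEven.real_part hn G' hNC X (algCon G) hmono hsum hne hl hE
  have heven' : n % 2 = 0 := Nat.even_iff.1 heven
  obtain ⟨τ, hτ⟩ := TwoConnEven.comb hn heven' G' hNC (1 - π) (by omega)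
    (fun i j hi hj h1 h2 => hcov i j hi hj (by omega) (by omega))
  rcases TwoConnEven.final hn heven' G' (1 - π) (by omega) τ hτ with h | h | h
  · obtain ⟨f⟩ := h
    exact Or.inl ⟨eG.symm.trans f⟩
  · obtain ⟨k, i, h1, h2, h3, ⟨f⟩⟩ := h
    exact Or.inr (Or.inl ⟨k, i, h1, h2, h3, ⟨eG.symm.trans f⟩⟩)
  · obtain ⟨k, i, h1, h2, h3, ⟨f⟩⟩ := h
    exact Or.inr (Or.inr ⟨k, i, h1, h2, h3, ⟨eG.symm.trans f⟩⟩)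
end
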